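/- arXiv:quant-ph/0505038 — 6 statements merged into one kernel-verified Lean document; each statement's English description precedes it below -/
import Mathlib

section
/- Strong subadditivity of the von Neumann entropy: for every density matrix ρ whose rows and columns are indexed by the triples Fin dA × Fin dB × Fin dC, one has S(ρ^{AB}) + S(ρ^{BC}) ≥ S(ρ) + S(ρ^{B}), where ρ^{AB} = tr_C ρ, ρ^{BC} = tr_A ρ, and ρ^{B} = tr_{AC} ρ. -/
open scoped ComplexConjugate ComplexOrder

/-- A density matrix: positive semidefinite with trace one. -/
def IsDensityMatrix {n : Type*} [Fintype n] (ρ : Matrix n n ℂ) : Prop :=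
  ρ.PosSemidef ∧ ρ.trace = 1

/-- The von Neumann entropy (in bits) of a (Hermitian) matrix:
`S(ρ) = −∑ᵢ λᵢ log₂ λᵢ` over the eigenvalues, with `0·log₂ 0 = 0`. -/
noncomputable def vnEntropy {n : Type*} [Fintype n] [DecidableEq n]
    (ρ : Matrix n n ℂ) : ℝ :=
  if h : ρ.IsHermitian then -∑ i, h.eigenvalues i * Real.logb 2 (h.eigenvalues i) else 0

/-- The trace norm of a Hermitian matrix: the sum of the absolute values of
its eigenvalues. -/
noncomputable def traceNorm {n : Type*} [Fintype n] [DecidableEq n]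
    (M : Matrix n n ℂ) : ℝ :=
  if h : M.IsHermitian then ∑ i, |h.eigenvalues i| else 0

/-- Partial trace over the third (C) system of a tripartite matrix. -/
noncomputable def ptraceC {dA dB dC : ℕ}
    (ρ : Matrix (Fin dA × Fin dB × Fin dC) (Fin dA × Fin dB × Fin dC) ℂ) :
    Matrix (Fin dA × Fin dB) (Fin dA × Fin dB) ℂ :=
  Matrix.of fun p q => ∑ k, ρ (p.1, p.2, k) (q.1, q.2, k)

/-- Partial trace over the first (A) system of a tripartite matrix. -/
noncomputable def ptraceA {dA dB dC : ℕ}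
    (ρ : Matrix (Fin dA × Fin dB × Fin dC) (Fin dA × Fin dB × Fin dC) ℂ) :
    Matrix (Fin dB × Fin dC) (Fin dB × Fin dC) ℂ :=
  Matrix.of fun p q => ∑ i, ρ (i, p.1, p.2) (i, q.1, q.2)

/-- Partial trace over the first and third (A and C) systems of a tripartite matrix. -/
noncomputable def ptraceAC {dA dB dC : ℕ}
    (ρ : Matrix (Fin dA × Fin dB × Fin dC) (Fin dA × Fin dB × Fin dC) ℂ) :
    Matrix (Fin dB) (Fin dB) ℂ :=
  Matrix.of fun j j' => ∑ i, ∑ k, ρ (i, j, k) (i, j', k)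

open Matrix Kronecker

section SSA

variable {n α β : Type*} [Fintype n] [DecidableEq n] [Fintype α] [DecidableEq α]
  [Fintype β] [DecidableEq β]

/-- partial trace over the left factor -/
noncomputable def ssaTrL (ρ : Matrix (α × β) (α × β) ℂ) : Matrix β β ℂ :=
  Matrix.of fun j j' => ∑ i, ρ (i, j) (i, j')

/-- the quadratic form -/
noncomputable def ssaQ (ρ σ X : Matrix n n ℂ) (s : ℝ) : ℝ :=
  2 * (Xᴴ * ρ).trace.re - (Xᴴ * σ * X).trace.re - s * (Xᴴ * X * ρ).trace.re

noncomputable def ssaF (W : Matrix n n ℂ) (p q : n → ℝ) (s : ℝ) : ℝ :=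
  ∑ x, ∑ i, Complex.normSq (W x i) * p i * (p i / (q x + s * p i))

lemma ssaQ_eq (ρ σ U V Y : Matrix n n ℂ) (p q : n → ℝ) (s : ℝ)
    (hU : Uᴴ * U = 1) (hV : Vᴴ * V = 1)
    (hρ : ρ = U * diagonal (fun i => (p i : ℂ)) * Uᴴ)
    (hσ : σ = V * diagonal (fun i => (q i : ℂ)) * Vᴴ) :
    ssaQ ρ σ (V * Y * Uᴴ) s = ∑ x, ∑ i, (2 * p i * (star (Y x i) * (Vᴴ * U) x i).re
      - (q x + s * p i) * Complex.normSq (Y x i)) := by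
  have hX : (V * Y * Uᴴ)ᴴ = U * Yᴴ * Vᴴ := by
    simp [conjTranspose_mul, Matrix.mul_assoc]
  have h1 : ((V * Y * Uᴴ)ᴴ * ρ).trace = (Yᴴ * ((Vᴴ * U) * diagonal (fun i => (p i : ℂ)))).trace := by
    rw [hX, hρ]
    rw [show U * Yᴴ * Vᴴ * (U * diagonal (fun i => (p i : ℂ)) * Uᴴ)
      = U * (Yᴴ * Vᴴ * U * diagonal (fun i => (p i : ℂ)) * Uᴴ) by simp only [Matrix.mul_assoc]]
    rw [trace_mul_comm, Matrix.mul_assoc _ Uᴴ U, hU]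
    simp only [Matrix.mul_assoc, Matrix.mul_one]
  have h2 : ((V * Y * Uᴴ)ᴴ * σ * (V * Y * Uᴴ)).trace
      = (Yᴴ * (diagonal (fun i => (q i : ℂ)) * Y)).trace := by
    rw [hX, hσ]
    rw [show U * Yᴴ * Vᴴ * (V * diagonal (fun i => (q i : ℂ)) * Vᴴ) * (V * Y * Uᴴ)
      = U * (Yᴴ * (Vᴴ * V) * diagonal (fun i => (q i : ℂ)) * (Vᴴ * V) * Y * Uᴴ) by
        simp only [Matrix.mul_assoc]]
    rw [trace_mul_comm, Matrix.mul_assoc _ Uᴴ U, hU, hV]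
    simp only [Matrix.mul_assoc, Matrix.mul_one, Matrix.one_mul]
  have h3 : ((V * Y * Uᴴ)ᴴ * (V * Y * Uᴴ) * ρ).trace
      = (Yᴴ * (Y * diagonal (fun i => (p i : ℂ)))).trace := by
    rw [hX, hρ]
    rw [show U * Yᴴ * Vᴴ * (V * Y * Uᴴ) * (U * diagonal (fun i => (p i : ℂ)) * Uᴴ)
      = U * (Yᴴ * (Vᴴ * V) * Y * (Uᴴ * U) * diagonal (fun i => (p i : ℂ)) * Uᴴ) by
        simp only [Matrix.mul_assoc]]
    rw [trace_mul_comm, Matrix.mul_assoc _ Uᴴ U, hU, hV]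
    simp only [Matrix.mul_assoc, Matrix.mul_one, Matrix.one_mul]
  have tr : ∀ Z : Matrix n n ℂ, (Yᴴ * Z).trace.re = ∑ x, ∑ i, (star (Y x i) * Z x i).re := by
    intro Z
    simp only [trace, diag, Matrix.mul_apply, conjTranspose_apply, Complex.re_sum]
    rw [Finset.sum_comm]
  unfold ssaQ
  rw [h1, h2, h3, tr, tr, tr]
  simp only [Finset.mul_sum, ← Finset.sum_sub_distrib]
  refine Finset.sum_congr rfl fun x _ => Finset.sum_congr rfl fun i _ => ?_
  rw [Matrix.mul_diagonal, Matrix.mul_diagonal, Matrix.diagonal_mul]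
  simp [Complex.normSq_apply]
  ring

lemma ssa_term_le (y w : ℂ) (p d : ℝ) (hd : 0 ≤ d) (h : d = 0 → p = 0) :
    2 * p * (star y * w).re - d * Complex.normSq y ≤ Complex.normSq w * p * (p / d) := by
  rcases hd.eq_or_lt with h0 | h0
  · have := h h0.symm
    subst h0; simp [this]
  · have : Complex.normSq w * p * (p / d) - (2 * p * (star y * w).re - d * Complex.normSq y)
       = ((p * w.re - d * y.re) ^ 2 + (p * w.im - d * y.im) ^ 2) / d := by
      field_simp
      simp [Complex.normSq_apply]
      ring
    have h2 : 0 ≤ ((p * w.re - d * y.re) ^ 2 + (p * w.im - d * y.im) ^ 2) / d := by positivity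
    linarith

lemma ssaQ_le (ρ σ U V X : Matrix n n ℂ) (p q : n → ℝ) (s : ℝ) (hs : 0 < s)
    (hp : ∀ i, 0 ≤ p i) (hq : ∀ i, 0 ≤ q i)
    (hU : Uᴴ * U = 1) (hV : Vᴴ * V = 1)
    (hρ : ρ = U * diagonal (fun i => (p i : ℂ)) * Uᴴ)
    (hσ : σ = V * diagonal (fun i => (q i : ℂ)) * Vᴴ) :
    ssaQ ρ σ X s ≤ ssaF (Vᴴ * U) p q s := by
  have hU' : U * Uᴴ = 1 := mul_eq_one_comm.mp hU
  have hV' : V * Vᴴ = 1 := mul_eq_one_comm.mp hV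
  have hX : X = V * (Vᴴ * X * U) * Uᴴ := by
    rw [show V * (Vᴴ * X * U) * Uᴴ = (V * Vᴴ) * X * (U * Uᴴ) by simp only [Matrix.mul_assoc],
      hU', hV']; simp
  rw [hX, ssaQ_eq ρ σ U V _ p q s hU hV hρ hσ]
  refine Finset.sum_le_sum fun x _ => Finset.sum_le_sum fun i _ => ?_
  have h1 := mul_nonneg hs.le (hp i)
  refine ssa_term_le _ _ _ _ (add_nonneg (hq x) h1) fun h => ?_
  have : s * p i = 0 := by linarith [hq x]
  rcases mul_eq_zero.mp this with h | h
  · linarith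
  · exact h

lemma ssaQ_exists (ρ σ U V : Matrix n n ℂ) (p q : n → ℝ) (s : ℝ) (hs : 0 < s)
    (hp : ∀ i, 0 ≤ p i) (hq : ∀ i, 0 ≤ q i)
    (hU : Uᴴ * U = 1) (hV : Vᴴ * V = 1)
    (hρ : ρ = U * diagonal (fun i => (p i : ℂ)) * Uᴴ)
    (hσ : σ = V * diagonal (fun i => (q i : ℂ)) * Vᴴ) :
    ∃ X, ssaQ ρ σ X s = ssaF (Vᴴ * U) p q s := by
  refine ⟨V * (Matrix.of fun x i => ((p i / (q x + s * p i) : ℝ) : ℂ) * (Vᴴ * U) x i) * Uᴴ, ?_⟩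
  rw [ssaQ_eq ρ σ U V _ p q s hU hV hρ hσ]
  refine Finset.sum_congr rfl fun x _ => Finset.sum_congr rfl fun i _ => ?_
  rw [Matrix.of_apply]
  generalize (Vᴴ * U) x i = w
  rcases (hp i).eq_or_lt with h0 | h0
  · simp [← h0]
  · have : 0 < q x + s * p i := add_pos_of_nonneg_of_pos (hq x) (mul_pos hs h0)
    generalize q x + s * p i = d at *
    rw [Complex.normSq_mul, Complex.normSq_ofReal]
    simp only [star_mul', Complex.star_def, Complex.conj_ofReal, mul_assoc, Complex.re_ofReal_mul]
    rw [show (starRingEnd ℂ w * w).re = Complex.normSq w by simp [Complex.normSq_apply]]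
    field_simp
    ring

lemma ssaTrL_conj (A B : Matrix β β ℂ) (ρ : Matrix (α × β) (α × β) ℂ) :
    ssaTrL (((1 : Matrix α α ℂ) ⊗ₖ A) * ρ * ((1 : Matrix α α ℂ) ⊗ₖ B)) = A * ssaTrL ρ * B := by
  ext j j'
  simp only [ssaTrL, Matrix.of_apply, Matrix.mul_apply, Fintype.sum_prod_type, kronecker_apply,
    Matrix.one_apply, ite_mul, one_mul, zero_mul, mul_ite, mul_zero, Finset.sum_ite_irrel,
    Finset.sum_const_zero, Finset.sum_ite_eq, Finset.sum_ite_eq', Finset.mem_univ, if_true,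
    Finset.sum_mul, Finset.mul_sum]
  rw [Finset.sum_comm]
  refine Finset.sum_congr rfl fun x _ => ?_
  rw [Finset.sum_comm]

/-- the weighted logarithm -/
noncomputable def ssaH (W : Matrix n n ℂ) (p q : n → ℝ) (s : ℝ) : ℝ :=
  ∑ x, ∑ i, Complex.normSq (W x i) * p i * Real.log (q x + s * p i)

lemma ssaH_deriv (W : Matrix n n ℂ) (p q : n → ℝ)
    (hp : ∀ i, 0 ≤ p i) (hq : ∀ i, 0 ≤ q i) 
    (hw : ∀ x i, Complex.normSq (W x i) * p i ≠ 0 → q x ≠ 0) (s : ℝ) (hs : 0 ≤ s) :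
    HasDerivAt (ssaH W p q) (ssaF W p q s) s := by
  unfold ssaH ssaF
  refine HasDerivAt.fun_sum fun x _ => HasDerivAt.fun_sum fun i _ => ?_
  by_cases h : Complex.normSq (W x i) * p i = 0
  · simp only [h, zero_mul]; exact hasDerivAt_const _ _
  · have h1 : 0 < q x := lt_of_le_of_ne (hq x) (hw x i h).symm
    have h2 := mul_nonneg hs (hp i)
    have h3 : HasDerivAt (fun s : ℝ => q x + s * p i) (p i) s := by
      simpa using ((hasDerivAt_id s).mul_const (p i)).const_add (q x)
    exact (h3.log (by linarith)).const_mul _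

lemma ssaH_lim (W : Matrix n n ℂ) (p q : n → ℝ) (hp : ∀ i, 0 ≤ p i) 
    (hW : ∀ i, ∑ x, Complex.normSq (W x i) = 1) :
    Filter.Tendsto (fun s => ssaH W p q s - (∑ i, p i) * Real.log s) Filter.atTop
      (nhds (∑ i, p i * Real.log (p i))) := by
  have e1 : ∀ f : n → ℝ, ∑ i, p i * f i = ∑ x, ∑ i, Complex.normSq (W x i) * p i * f i := by
    intro f
    rw [Finset.sum_comm]
    refine Finset.sum_congr rfl fun i _ => ?_
    simp only [mul_assoc]
    rw [← Finset.sum_mul, hW, one_mul]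
  have e2 : ∀ s, ssaH W p q s - (∑ i, p i) * Real.log s
      = ∑ x, ∑ i, Complex.normSq (W x i) * p i * (Real.log (q x + s * p i) - Real.log s) := by
    intro s
    rw [Finset.sum_mul, e1]
    simp only [ssaH, mul_sub, Finset.sum_sub_distrib]
  simp only [e2]
  rw [e1]
  refine tendsto_finsetSum _ fun x _ => tendsto_finsetSum _ fun i _ => ?_
  rcases (hp i).eq_or_lt with h0 | h0
  · simp [← h0]
  refine Filter.Tendsto.const_mul _ ?_
  have h1 : Filter.Tendsto (fun s : ℝ => Real.log (q x / s + p i)) Filter.atTop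
      (nhds (Real.log (p i))) := by
    have : Filter.Tendsto (fun s : ℝ => q x / s + p i) Filter.atTop (nhds (0 + p i)) :=
      (Filter.Tendsto.const_div_atTop Filter.tendsto_id _).add_const _
    rw [zero_add] at this
    exact this.log h0.ne'
  have h2 : ∀ᶠ s : ℝ in Filter.atTop, 0 < q x / s + p i := by
    have : Filter.Tendsto (fun s : ℝ => q x / s + p i) Filter.atTop (nhds (0 + p i)) :=
      (Filter.Tendsto.const_div_atTop Filter.tendsto_id _).add_const _
    rw [zero_add] at this
    exact this.eventually (lt_mem_nhds h0)
  refine h1.congr' ?_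
  filter_upwards [h2, Filter.eventually_gt_atTop 0] with s hs hs0
  have : q x + s * p i = s * (q x / s + p i) := by field_simp
  rw [this, Real.log_mul hs0.ne' hs.ne']
  ring

lemma ssaW_col (W : Matrix n n ℂ) (hW : Wᴴ * W = 1) (i : n) :
    ∑ x, Complex.normSq (W x i) = 1 := by
  have := congrFun (congrFun hW i) i
  simp only [Matrix.mul_apply, conjTranspose_apply, Matrix.one_apply_eq] at this
  have h2 := congrArg Complex.re this
  simpa [Complex.normSq_apply] using h2

lemma ssaW_row (W : Matrix n n ℂ) (p : n → ℝ) (x : n) :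
    ((∑ i, Complex.normSq (W x i) * p i : ℝ) : ℂ)
      = (W * diagonal (fun i => (p i : ℂ)) * Wᴴ) x x := by
  rw [Matrix.mul_apply]
  push_cast
  refine Finset.sum_congr rfl fun i _ => ?_
  rw [Matrix.mul_diagonal, conjTranspose_apply, Complex.normSq_eq_conj_mul_self]
  simp; ring

/-- entropy-like sum in natural log -/
noncomputable def ssaE {A : Matrix n n ℂ} (h : A.IsHermitian) : ℝ :=
  ∑ i, h.eigenvalues i * Real.log (h.eigenvalues i)

lemma ssa_sp {A : Matrix n n ℂ} (h : A.IsHermitian) :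
    A = (h.eigenvectorUnitary : Matrix n n ℂ) * diagonal (fun i => (h.eigenvalues i : ℂ))
        * (h.eigenvectorUnitary : Matrix n n ℂ)ᴴ := by
  conv_lhs => rw [h.spectral_theorem]
  rfl

lemma ssa_un {A : Matrix n n ℂ} (h : A.IsHermitian) :
    (h.eigenvectorUnitary : Matrix n n ℂ)ᴴ * (h.eigenvectorUnitary : Matrix n n ℂ) = 1 :=
  Unitary.coe_star_mul_self h.eigenvectorUnitary

lemma ssa_data (ρ : Matrix (α × β) (α × β) ℂ) (hρ : ρ.PosSemidef) (hτ : (ssaTrL ρ).PosSemidef) :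
    ∃ (U V : Matrix (α × β) (α × β) ℂ) (p q : α × β → ℝ),
      (∀ i, 0 ≤ p i) ∧ (∀ i, 0 ≤ q i) ∧ Uᴴ * U = 1 ∧ Vᴴ * V = 1 ∧
      ρ = U * diagonal (fun i => (p i : ℂ)) * Uᴴ ∧
      ((1 : Matrix α α ℂ) ⊗ₖ ssaTrL ρ) = V * diagonal (fun i => (q i : ℂ)) * Vᴴ ∧
      (∀ x i, Complex.normSq ((Vᴴ * U) x i) * p i ≠ 0 → q x ≠ 0) ∧
      (∀ i, ∑ x, Complex.normSq ((Vᴴ * U) x i) = 1) ∧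
      ssaH (Vᴴ * U) p q 0 = ssaE hτ.1 ∧
      ∑ i, p i * Real.log (p i) = ssaE hρ.1 ∧
      ((∑ i, p i : ℝ) : ℂ) = ρ.trace := by
  have sp' := ssa_sp hρ.1
  have un' := ssa_un hρ.1
  have spt := ssa_sp hτ.1
  have unt := ssa_un hτ.1
  have hp := hρ.eigenvalues_nonneg
  have hq := hτ.eigenvalues_nonneg
  have htr : ((∑ i, hρ.1.eigenvalues i : ℝ) : ℂ) = ρ.trace := by
    rw [hρ.1.trace_eq_sum_eigenvalues]; push_cast; rfl
  unfold ssaE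
  generalize (hρ.1.eigenvectorUnitary : Matrix (α × β) (α × β) ℂ) = U at *
  generalize (hτ.1.eigenvectorUnitary : Matrix β β ℂ) = V at *
  generalize hρ.1.eigenvalues = p at *
  generalize hτ.1.eigenvalues = q at *
  have hVt : ((1 : Matrix α α ℂ) ⊗ₖ V)ᴴ = (1 : Matrix α α ℂ) ⊗ₖ Vᴴ := by
    rw [conjTranspose_kronecker, conjTranspose_one]
  have hVV : ((1 : Matrix α α ℂ) ⊗ₖ V)ᴴ * ((1 : Matrix α α ℂ) ⊗ₖ V) = 1 := by
    rw [hVt, ← mul_kronecker_mul, unt, Matrix.one_mul, one_kronecker_one]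
  have hVV' := mul_eq_one_comm.mp hVV
  have key : ∀ j, ∑ a, ∑ i,
      Complex.normSq ((((1 : Matrix α α ℂ) ⊗ₖ V)ᴴ * U) (a, j) i) * p i = q j := by
    intro j
    apply Complex.ofReal_injective
    rw [Complex.ofReal_sum]
    simp only [ssaW_row]
    have h1 : ((1 : Matrix α α ℂ) ⊗ₖ V)ᴴ * U * diagonal (fun i => (p i : ℂ))
        * (((1 : Matrix α α ℂ) ⊗ₖ V)ᴴ * U)ᴴ
        = ((1 : Matrix α α ℂ) ⊗ₖ Vᴴ) * ρ * ((1 : Matrix α α ℂ) ⊗ₖ V) := by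
      rw [conjTranspose_mul, conjTranspose_conjTranspose, hVt, sp']
      simp only [Matrix.mul_assoc]
    rw [h1]
    have h2 := congrFun (congrFun (ssaTrL_conj Vᴴ V ρ) j) j
    rw [spt, show Vᴴ * (V * diagonal (fun i => (q i : ℂ)) * Vᴴ) * V
      = (Vᴴ * V) * diagonal (fun i => (q i : ℂ)) * (Vᴴ * V) by simp only [Matrix.mul_assoc],
      unt, Matrix.one_mul, Matrix.mul_one, diagonal_apply_eq] at h2
    exact h2
  refine ⟨U, (1 : Matrix α α ℂ) ⊗ₖ V, p, fun x => q x.2, hp, fun x => hq x.2, un', hVV, sp',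
    ?_, ?_, ?_, ?_, rfl, htr⟩
  · rw [hVt, show (diagonal (fun x : α × β => (q x.2 : ℂ)))
      = (1 : Matrix α α ℂ) ⊗ₖ diagonal (fun i => (q i : ℂ)) by
        rw [← diagonal_one, diagonal_kronecker_diagonal]; simp,
      ← mul_kronecker_mul, ← mul_kronecker_mul, ← spt, Matrix.one_mul, Matrix.one_mul]
  · rintro ⟨a, j⟩ i hne hq0
    apply hne
    have h1 := key j
    rw [show q j = 0 from hq0] at h1
    have nn : ∀ x i, 0 ≤ Complex.normSq ((((1 : Matrix α α ℂ) ⊗ₖ V)ᴴ * U) x i) * p i :=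
      fun x i => mul_nonneg (Complex.normSq_nonneg _) (hp i)
    rw [Finset.sum_eq_zero_iff_of_nonneg
      (fun a _ => Finset.sum_nonneg fun i _ => nn (a, j) i)] at h1
    have h2 := h1 a (Finset.mem_univ _)
    rw [Finset.sum_eq_zero_iff_of_nonneg (fun i _ => nn (a, j) i)] at h2
    exact h2 i (Finset.mem_univ _)
  · apply ssaW_col
    rw [conjTranspose_mul, conjTranspose_conjTranspose, Matrix.mul_assoc,
      ← Matrix.mul_assoc _ _ U, hVV', Matrix.one_mul, un']
  · simp only [ssaH, zero_mul, add_zero]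
    rw [Fintype.sum_prod_type, Finset.sum_comm]
    refine Finset.sum_congr rfl fun j _ => ?_
    simp only [← Finset.sum_mul]
    rw [key j]

end SSA

section SSA2

variable {dA dB dC : ℕ}

/-- `X ⊗ 1_C` -/
noncomputable def ssaLift (X : Matrix (Fin dA × Fin dB) (Fin dA × Fin dB) ℂ) :
    Matrix (Fin dA × Fin dB × Fin dC) (Fin dA × Fin dB × Fin dC) ℂ :=
  (X ⊗ₖ (1 : Matrix (Fin dC) (Fin dC) ℂ)).submatrix (Equiv.prodAssoc _ _ _).symm
    (Equiv.prodAssoc _ _ _).symm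

lemma ssaLift_mul (X Y : Matrix (Fin dA × Fin dB) (Fin dA × Fin dB) ℂ) :
    (ssaLift (X * Y) : Matrix (Fin dA × Fin dB × Fin dC) _ ℂ) = ssaLift X * ssaLift Y := by
  unfold ssaLift
  rw [submatrix_mul_equiv, ← mul_kronecker_mul, Matrix.one_mul]

lemma ssaLift_star (X : Matrix (Fin dA × Fin dB) (Fin dA × Fin dB) ℂ) :
    (ssaLift Xᴴ : Matrix (Fin dA × Fin dB × Fin dC) _ ℂ) = (ssaLift X)ᴴ := by
  unfold ssaLift
  rw [conjTranspose_submatrix, conjTranspose_kronecker, conjTranspose_one]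

lemma ssaLift_trace (X : Matrix (Fin dA × Fin dB) (Fin dA × Fin dB) ℂ)
    (ρ : Matrix (Fin dA × Fin dB × Fin dC) (Fin dA × Fin dB × Fin dC) ℂ) :
    (ssaLift X * ρ).trace = (X * ptraceC ρ).trace := by
  simp only [trace, diag, Matrix.mul_apply, ssaLift, ptraceC, submatrix_apply, kronecker_apply,
    Fintype.sum_prod_type, Equiv.prodAssoc_symm_apply, Matrix.of_apply, Matrix.one_apply,
    mul_ite, mul_one, mul_zero, ite_mul, zero_mul, Finset.sum_ite_eq, Finset.mem_univ, if_true,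
    Finset.mul_sum]
  refine Finset.sum_congr rfl fun a _ => Finset.sum_congr rfl fun b _ => ?_
  rw [Finset.sum_comm]
  refine Finset.sum_congr rfl fun a' _ => ?_
  rw [Finset.sum_comm]

lemma ssaQ_lift (X : Matrix (Fin dA × Fin dB) (Fin dA × Fin dB) ℂ)
    (ρ σ : Matrix (Fin dA × Fin dB × Fin dC) (Fin dA × Fin dB × Fin dC) ℂ) (s : ℝ) :
    ssaQ ρ σ (ssaLift X) s = ssaQ (ptraceC ρ) (ptraceC σ) X s := by
  unfold ssaQ
  rw [trace_mul_comm _ (ssaLift X), trace_mul_comm _ X, ← Matrix.mul_assoc, ← Matrix.mul_assoc,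
    ← ssaLift_star, ← ssaLift_mul, ← ssaLift_mul, ssaLift_trace, ssaLift_trace, ssaLift_trace]

lemma ssaTrL_posSemidef {α β : Type*} [Fintype α] [DecidableEq α] [Fintype β] [DecidableEq β]
    (ρ : Matrix (α × β) (α × β) ℂ) (hρ : ρ.PosSemidef) : (ssaTrL ρ).PosSemidef := by
  have : ssaTrL ρ = ∑ i, ρ.submatrix (fun j => (i, j)) (fun j => (i, j)) := by
    ext j j'; simp [ssaTrL, Matrix.sum_apply]
  rw [this]
  exact posSemidef_sum _ fun i _ => hρ.submatrix _

lemma ssa_ptraceC_posSemidef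
    (ρ : Matrix (Fin dA × Fin dB × Fin dC) (Fin dA × Fin dB × Fin dC) ℂ) (hρ : ρ.PosSemidef) :
    (ptraceC ρ).PosSemidef := by
  have : ptraceC ρ = ∑ k, ρ.submatrix (fun p => (p.1, p.2, k)) (fun p => (p.1, p.2, k)) := by
    ext j j'; simp [ptraceC, Matrix.sum_apply]
  rw [this]
  exact posSemidef_sum _ fun i _ => hρ.submatrix _

lemma ssa_ptraceC_kron (τ : Matrix (Fin dB × Fin dC) (Fin dB × Fin dC) ℂ) 
    (τ' : Matrix (Fin dB) (Fin dB) ℂ) (h : ∀ j j', τ' j j' = ∑ k, τ (j, k) (j', k)) :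
    ptraceC ((1 : Matrix (Fin dA) (Fin dA) ℂ) ⊗ₖ τ) = (1 : Matrix (Fin dA) (Fin dA) ℂ) ⊗ₖ τ' := by
  ext ⟨a, b⟩ ⟨a', b'⟩
  simp [ptraceC, kronecker_apply, h, Finset.mul_sum]

lemma ssa_main (ρ : Matrix (Fin dA × Fin dB × Fin dC) (Fin dA × Fin dB × Fin dC) ℂ)
    (h1 : ρ.PosSemidef) (h2 : (ssaTrL ρ).PosSemidef) (h3 : (ptraceC ρ).PosSemidef)
    (h4 : (ssaTrL (ptraceC ρ)).PosSemidef) :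
    ssaE h2.1 - ssaE h4.1 ≤ ssaE h1.1 - ssaE h3.1 := by
  obtain ⟨U, V, p, q, hp, hq, hU, hV, hρ, hσ, hw, hW, h0, hE, htr⟩ := ssa_data ρ h1 h2
  obtain ⟨U', V', p', q', hp', hq', hU', hV', hρ', hσ', hw', hW', h0', hE', htr'⟩ :=
    ssa_data (ptraceC ρ) h3 h4
  have hσσ : ptraceC ((1 : Matrix (Fin dA) (Fin dA) ℂ) ⊗ₖ ssaTrL ρ)
      = (1 : Matrix (Fin dA) (Fin dA) ℂ) ⊗ₖ ssaTrL (ptraceC ρ) := by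
    apply ssa_ptraceC_kron
    intro j j'
    simp only [ssaTrL, ptraceC, Matrix.of_apply]
    rw [Finset.sum_comm]
  have hF : ∀ s, 0 < s → ssaF (V'ᴴ * U') p' q' s ≤ ssaF (Vᴴ * U) p q s := by
    intro s hs
    obtain ⟨X, hX⟩ := ssaQ_exists _ _ U' V' p' q' s hs hp' hq' hU' hV' hρ' hσ'
    rw [← hX, ← hσσ, ← ssaQ_lift]
    exact ssaQ_le _ _ U V _ p q s hs hp hq hU hV hρ hσ
  have hpp : ∑ i, p i = ∑ i, p' i := by
    apply Complex.ofReal_injective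
    rw [htr, htr']
    have := ssaLift_trace 1 ρ
    have h1 : (ssaLift (1 : Matrix (Fin dA × Fin dB) (Fin dA × Fin dB) ℂ) :
      Matrix (Fin dA × Fin dB × Fin dC) _ ℂ) = 1 := by
      unfold ssaLift; rw [one_kronecker_one, submatrix_one_equiv]
    rwa [h1, Matrix.one_mul, Matrix.one_mul] at this
  have hd : ∀ s, 0 ≤ s → HasDerivAt (fun s => ssaH (Vᴴ * U) p q s - ssaH (V'ᴴ * U') p' q' s)
      (ssaF (Vᴴ * U) p q s - ssaF (V'ᴴ * U') p' q' s) s := fun s hs =>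
    (ssaH_deriv _ p q hp hq hw s hs).sub (ssaH_deriv _ p' q' hp' hq' hw' s hs)
  have hmono : MonotoneOn (fun s => ssaH (Vᴴ * U) p q s - ssaH (V'ᴴ * U') p' q' s)
      (Set.Ici 0) := by
    refine monotoneOn_of_deriv_nonneg (convex_Ici 0)
      (fun s hs => (hd s hs).continuousAt.continuousWithinAt) ?_ ?_
    · intro s hs
      rw [interior_Ici] at hs
      exact (hd s (le_of_lt hs)).differentiableAt.differentiableWithinAt
    · intro s hs
      rw [interior_Ici] at hs
      rw [(hd s (le_of_lt hs)).deriv]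
      linarith [hF s hs]
  have hlim := (ssaH_lim (Vᴴ * U) p q hp hW).sub (ssaH_lim (V'ᴴ * U') p' q' hp' hW')
  rw [← hE, ← hE', ← h0, ← h0']
  refine ge_of_tendsto hlim ?_
  filter_upwards [Filter.eventually_ge_atTop 0] with s hs
  have := hmono Set.self_mem_Ici hs hs
  simp only at this
  rw [hpp]
  linarith

lemma ssa_vnEntropy {n : Type*} [Fintype n] [DecidableEq n] {A : Matrix n n ℂ}
    (h : A.IsHermitian) : vnEntropy A = -(ssaE h) / Real.log 2 := by
  rw [vnEntropy, dif_pos h, ssaE, neg_div, Finset.sum_div]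
  simp only [Real.logb, mul_div_assoc]

end SSA2

/-- strong subadditivity of the von Neumann entropy. -/
theorem vnEntropy_strong_subadditive {dA dB dC : ℕ}
    (ρ : Matrix (Fin dA × Fin dB × Fin dC) (Fin dA × Fin dB × Fin dC) ℂ)
    (hρ : IsDensityMatrix ρ) :
    vnEntropy ρ + vnEntropy (ptraceAC ρ) ≤
      vnEntropy (ptraceC ρ) + vnEntropy (ptraceA ρ) := by
  have h1 := hρ.1
  have h2 := ssaTrL_posSemidef _ h1
  have h3 := ssa_ptraceC_posSemidef _ h1
  have h4 := ssaTrL_posSemidef _ h3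
  have e1 : ptraceA ρ = ssaTrL ρ := rfl
  have e2 : ptraceAC ρ = ssaTrL (ptraceC ρ) := rfl
  have key := ssa_main ρ h1 h2 h3 h4
  rw [e1, e2, ssa_vnEntropy h1.1, ssa_vnEntropy h2.1, ssa_vnEntropy h3.1, ssa_vnEntropy h4.1,
    ← add_div, ← add_div]
  have := Real.log_pos (show (1 : ℝ) < 2 by norm_num)
  gcongr ?_ / _
  linarith
end

section
/- For the 3×3 antisymmetric Werner state, every pure-state decomposition has average entanglement exactly 1: let ρ be the matrix with rows and columns indexed by Fin 3 × Fin 3 and entries ρ_{(i,j),(k,l)} = (1/6)(δ_{ik}δ_{jl} − δ_{il}δ_{jk}). Then for every finite decomposition ρ = ∑_{i=1}^m p_i v_i v_i† with p_i > 0, ∑_i p_i = 1 and unit vectors v_i, each v_i has entropy of entanglement E(v_i) = 1, and hence ∑_i p_i E(v_i) = 1. Consequently both the entanglement of formation and the entanglement of assistance of ρ equal 1. -/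
open scoped ComplexConjugate ComplexOrder

/-- The entropy of entanglement of a bipartite pure-state vector:
the entropy of its reduced state on the first factor. -/
noncomputable def entE {A B : Type*} [Fintype A] [DecidableEq A] [Fintype B]
    (v : A × B → ℂ) : ℝ :=
  vnEntropy (Matrix.of fun x x' => ∑ y, v (x, y) * conj (v (x', y)))

/-- The entanglement of formation: infimum of the average pure-state entanglement
over all finite pure-state decompositions. -/
noncomputable def EoF {A B : Type*} [Fintype A] [DecidableEq A] [Fintype B]
    (ρ : Matrix (A × B) (A × B) ℂ) : ℝ :=
  sInf {e : ℝ | ∃ (m : ℕ) (p : Fin m → ℝ) (v : Fin m → A × B → ℂ),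
    (∀ i, 0 < p i) ∧ (∑ i, p i = 1) ∧ (∀ i, ∑ x, ‖v i x‖ ^ 2 = 1) ∧
    ρ = ∑ i, (p i : ℂ) • Matrix.of (fun x y => v i x * conj (v i y)) ∧
    e = ∑ i, p i * entE (v i)}

/-- The entanglement of assistance: supremum of the average pure-state entanglement
over all finite pure-state decompositions. -/
noncomputable def EoA {A B : Type*} [Fintype A] [DecidableEq A] [Fintype B]
    (ρ : Matrix (A × B) (A × B) ℂ) : ℝ :=
  sSup {e : ℝ | ∃ (m : ℕ) (p : Fin m → ℝ) (v : Fin m → A × B → ℂ),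
    (∀ i, 0 < p i) ∧ (∑ i, p i = 1) ∧ (∀ i, ∑ x, ‖v i x‖ ^ 2 = 1) ∧
    ρ = ∑ i, (p i : ℂ) • Matrix.of (fun x y => v i x * conj (v i y)) ∧
    e = ∑ i, p i * entE (v i)}

/-- The 3×3 antisymmetric Werner state,
`ρ_{(i,j),(k,l)} = (1/6)(δ_{ik}δ_{jl} − δ_{il}δ_{jk})`. -/
noncomputable def wernerAS : Matrix (Fin 3 × Fin 3) (Fin 3 × Fin 3) ℂ :=
  Matrix.of fun x y =>
    (1/6 : ℂ) * ((if x.1 = y.1 ∧ x.2 = y.2 then 1 else 0)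
               - (if x.1 = y.2 ∧ x.2 = y.1 then 1 else 0))

theorem aux_entE (v : Fin 3 × Fin 3 → ℂ) (hn : ∑ x, ‖v x‖ ^ 2 = 1)
    (ha : ∀ i j, v (i, j) + v (j, i) = 0) : entE v = 1 := by
  set R : Matrix (Fin 3) (Fin 3) ℂ :=
    Matrix.of fun x x' => ∑ y, v (x, y) * conj (v (x', y)) with hR
  have hH : R.IsHermitian := by
    ext i j
    simp [hR, Matrix.conjTranspose_apply, mul_comm]
  have hn' : ∑ x, v x * conj (v x) = 1 := by
    have := congrArg (fun r : ℝ => (r : ℂ)) hn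
    push_cast at this
    rw [← this]
    exact Finset.sum_congr rfl fun x _ => Complex.mul_conj' (v x)
  have htr : R.trace = 1 := by
    rw [← hn', Fintype.sum_prod_type]
    simp [hR, Matrix.trace]
  have hd : ∀ i, v (i, i) = 0 := fun i => by
    have := ha i i
    linear_combination this / 2
  have h10 : v (1, 0) = - v (0, 1) := by linear_combination ha 1 0
  have h20 : v (2, 0) = - v (0, 2) := by linear_combination ha 2 0
  have h21 : v (2, 1) = - v (1, 2) := by linear_combination ha 2 1
  have hs : v (0,1) * conj (v (0,1)) + v (0,2) * conj (v (0,2)) + v (1,2) * conj (v (1,2))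
      = 1 / 2 := by
    rw [Fintype.sum_prod_type] at hn'
    simp only [Fin.sum_univ_three, hd, h10, h20, h21, map_neg, map_zero] at hn'
    linear_combination hn' / 2
  have hRR : R * R = (1 / 2 : ℂ) • R := by
    ext i j
    have : (R * R) i j = (R i j) * (v (0,1) * conj (v (0,1)) + v (0,2) * conj (v (0,2))
        + v (1,2) * conj (v (1,2))) := by
      fin_cases i <;> fin_cases j <;>
      simp [hR, Matrix.mul_apply, Fin.sum_univ_three, hd, h10, h20, h21] <;> ring
    rw [this, hs]
    simp [mul_comm]
  have hev : ∀ i, hH.eigenvalues i * hH.eigenvalues i = 1 / 2 * hH.eigenvalues i := by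
    intro i
    have h1 := hH.mulVec_eigenvectorBasis i
    have hne : (hH.eigenvectorBasis i) ≠ 0 := hH.eigenvectorBasis.orthonormal.ne_zero i
    have h2 : (R * R).mulVec (hH.eigenvectorBasis i).ofLp
        = (hH.eigenvalues i * hH.eigenvalues i) • (hH.eigenvectorBasis i).ofLp := by
      rw [← Matrix.mulVec_mulVec, h1, Matrix.mulVec_smul, h1, smul_smul]
    rw [hRR, Matrix.smul_mulVec, h1] at h2
    obtain ⟨k, hk⟩ : ∃ k, (hH.eigenvectorBasis i).ofLp k ≠ 0 := by
      by_contra! hc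
      exact hne (by ext k; simpa using hc k)
    have h3 := congrFun h2 k
    simp only [Pi.smul_apply, Complex.real_smul, smul_eq_mul] at h3
    rw [← mul_assoc] at h3
    have h4 := mul_right_cancel₀ hk h3
    apply Complex.ofReal_injective
    push_cast at h4 ⊢
    exact h4.symm
  have hsum : ∑ i, hH.eigenvalues i = 1 := by
    have := hH.trace_eq_sum_eigenvalues
    rw [htr] at this
    apply Complex.ofReal_injective
    push_cast
    exact this.symm
  have hE : entE v = -∑ i, hH.eigenvalues i * Real.logb 2 (hH.eigenvalues i) := by
    unfold entE vnEntropy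
    exact dif_pos hH
  rw [hE, ← hsum, ← Finset.sum_neg_distrib]
  refine Finset.sum_congr rfl fun i _ => ?_
  have h := hev i
  rcases eq_or_ne (hH.eigenvalues i) 0 with h0 | h0
  · simp [h0]
  · have h5 : hH.eigenvalues i = 1 / 2 := mul_right_cancel₀ h0 h
    have h6 : Real.logb 2 (1 / 2) = -1 := by
      rw [one_div, Real.logb_inv, Real.logb_self_eq_one (by norm_num)]
    rw [h5, h6]; norm_num

theorem aux_antisymm (m : ℕ) (p : Fin m → ℝ) (v : Fin m → Fin 3 × Fin 3 → ℂ)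
    (hp : ∀ i, 0 < p i)
    (h : wernerAS = ∑ i, (p i : ℂ) • Matrix.of (fun x y => v i x * conj (v i y)))
    (a : Fin m) (i j : Fin 3) : v a (i, j) + v a (j, i) = 0 := by
  have key : ∑ a, p a * ‖v a (i, j) + v a (j, i)‖ ^ 2 = 0 := by
    have e : ∀ x y, wernerAS x y = ∑ a, (p a : ℂ) * (v a x * conj (v a y)) := by
      intro x y
      rw [h, Matrix.sum_apply]
      simp
    have e0 : wernerAS (i, j) (i, j) + wernerAS (i, j) (j, i) + wernerAS (j, i) (i, j)
        + wernerAS (j, i) (j, i) = 0 := by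
      simp only [wernerAS, Matrix.of_apply]
      by_cases hij : i = j
      · subst hij; simp
      · have hji : ¬ j = i := fun h => hij h.symm
        simp [hij, hji]
    rw [e, e, e, e, ← Finset.sum_add_distrib, ← Finset.sum_add_distrib,
      ← Finset.sum_add_distrib] at e0
    apply Complex.ofReal_injective
    push_cast
    rw [← e0]
    refine Finset.sum_congr rfl fun a _ => ?_
    rw [← Complex.mul_conj', map_add]
    ring
  rw [Finset.sum_eq_zero_iff_of_nonneg
    (fun a _ => mul_nonneg (hp a).le (sq_nonneg _))] at key
  have := key a (Finset.mem_univ a)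
  rcases mul_eq_zero.1 this with h1 | h1
  · exact absurd h1 (hp a).ne'
  · exact norm_eq_zero.1 (pow_eq_zero_iff (two_ne_zero) |>.1 h1)

theorem aux_main (m : ℕ) (p : Fin m → ℝ) (v : Fin m → Fin 3 × Fin 3 → ℂ)
    (hp : ∀ i, 0 < p i) (hs : ∑ i, p i = 1) (hn : ∀ i, ∑ x, ‖v i x‖ ^ 2 = 1)
    (h : wernerAS = ∑ i, (p i : ℂ) • Matrix.of (fun x y => v i x * conj (v i y))) :
    (∀ i, entE (v i) = 1) ∧ ∑ i, p i * entE (v i) = 1 := by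
  have h1 : ∀ i, entE (v i) = 1 := fun i => aux_entE _ (hn i) (aux_antisymm m p v hp h i)
  exact ⟨h1, by simp [h1, hs]⟩

noncomputable def auxV (k : Fin 3) (x : Fin 3 × Fin 3) : ℂ :=
  ((√2 : ℝ) : ℂ)⁻¹ * (if x = (k + 1, k + 2) then 1 else if x = (k + 2, k + 1) then -1 else 0)

theorem aux_sq : ((√2 : ℝ) : ℂ)⁻¹ * ((√2 : ℝ) : ℂ)⁻¹ = 1 / 2 := by
  rw [← mul_inv, ← Complex.ofReal_mul, Real.mul_self_sqrt (by norm_num)]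
  norm_num

theorem aux_norm (k : Fin 3) : ∑ x, ‖auxV k x‖ ^ 2 = 1 := by
  rw [Fintype.sum_prod_type]
  fin_cases k <;> simp [auxV, Fin.sum_univ_three, mul_pow] <;> norm_num

theorem aux_dec : wernerAS =
    ∑ i : Fin 3, (((fun _ => 1 / 3 : Fin 3 → ℝ) i : ℝ) : ℂ) •
      Matrix.of (fun x y => auxV i x * conj (auxV i y)) := by
  have e : ∀ i x y, auxV i x * conj (auxV i y) = 1 / 2 *
      ((if x = (i + 1, i + 2) then 1 else if x = (i + 2, i + 1) then -1 else 0) *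
      (if y = (i + 1, i + 2) then 1 else if y = (i + 2, i + 1) then -1 else 0)) := by
    intro i x y
    rw [← aux_sq]
    simp only [auxV, map_mul, map_inv₀, Complex.conj_ofReal]
    have : conj (if y = (i + 1, i + 2) then (1 : ℂ) else if y = (i + 2, i + 1) then -1 else 0)
      = (if y = (i + 1, i + 2) then (1 : ℂ) else if y = (i + 2, i + 1) then -1 else 0) := by
      split_ifs <;> simp
    rw [this]; ring
  simp only [e]
  ext ⟨a, b⟩ ⟨c, d⟩
  rw [Matrix.sum_apply]
  simp only [Matrix.smul_apply, Matrix.of_apply, wernerAS, Fin.sum_univ_three]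
  fin_cases a <;> fin_cases b <;> fin_cases c <;> fin_cases d <;> simp <;> norm_num

theorem aux_set : {e : ℝ | ∃ (m : ℕ) (p : Fin m → ℝ) (v : Fin m → Fin 3 × Fin 3 → ℂ),
    (∀ i, 0 < p i) ∧ (∑ i, p i = 1) ∧ (∀ i, ∑ x, ‖v i x‖ ^ 2 = 1) ∧
    wernerAS = ∑ i, (p i : ℂ) • Matrix.of (fun x y => v i x * conj (v i y)) ∧
    e = ∑ i, p i * entE (v i)} = {1} := by
  ext e
  constructor
  · rintro ⟨m, p, v, hp, hs, hn, h, rfl⟩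
    exact (aux_main m p v hp hs hn h).2
  · rintro rfl
    have hp : ∀ i : Fin 3, 0 < (fun _ => 1 / 3 : Fin 3 → ℝ) i := fun i => by norm_num
    have hs : ∑ i, (fun _ => 1 / 3 : Fin 3 → ℝ) i = 1 := by simp
    exact ⟨3, fun _ => 1 / 3, auxV, hp, hs, aux_norm, aux_dec,
      (aux_main 3 _ auxV hp hs aux_norm aux_dec).2.symm⟩

/-- every pure-state decomposition of the 3×3 antisymmetric Werner
state has every component of entanglement 1, hence average entanglement 1;
consequently its entanglement of formation and of assistance both equal 1. -/
theorem werner_every_decomposition_entanglement_one :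
    (∀ (m : ℕ) (p : Fin m → ℝ) (v : Fin m → Fin 3 × Fin 3 → ℂ),
      (∀ i, 0 < p i) → (∑ i, p i = 1) → (∀ i, ∑ x, ‖v i x‖ ^ 2 = 1) →
      wernerAS = ∑ i, (p i : ℂ) • Matrix.of (fun x y => v i x * conj (v i y)) →
      (∀ i, entE (v i) = 1) ∧ ∑ i, p i * entE (v i) = 1) ∧
    EoF wernerAS = 1 ∧ EoA wernerAS = 1 := by
  refine ⟨aux_main, ?_, ?_⟩
  · unfold EoF
    rw [aux_set, csInf_singleton]
  · unfold EoA
    rw [aux_set, csSup_singleton]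
end

section
/- Superadditivity of the entanglement of assistance: let ρ be the density matrix of the 3×3 antisymmetric Werner state, with entries ρ_{(i,j),(k,l)} = (1/6)(δ_{ik}δ_{jl} − δ_{il}δ_{jk}) for i,j,k,l ∈ Fin 3, and let σ be the two-copy state with rows and columns indexed by (Fin 3 × Fin 3) × (Fin 3 × Fin 3) (first component the pair of A-indices, second the pair of B-indices), with entries σ_{((a₁,a₂),(b₁,b₂)),((a₁',a₂'),(b₁',b₂'))} = ρ_{(a₁,b₁),(a₁',b₁')}·ρ_{(a₂,b₂),(a₂',b₂')}. Then there exists a finite decomposition σ = ∑_{i=1}^m p_i v_i v_i† with p_i > 0, ∑_i p_i = 1 and unit vectors v_i such that ∑_i p_i E(v_i) ≥ 5/2; in particular the entanglement of assistance of σ is at least 5/2, strictly greater than twice the entanglement of assistance of ρ (which is 1). -/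
open scoped ComplexConjugate ComplexOrder

/-- Two copies of the Werner state, regrouped so that the first component collects
the pair of A-indices and the second the pair of B-indices. -/
noncomputable def wernerTwo :
    Matrix ((Fin 3 × Fin 3) × (Fin 3 × Fin 3)) ((Fin 3 × Fin 3) × (Fin 3 × Fin 3)) ℂ :=
  Matrix.of fun x y =>
    wernerAS (x.1.1, x.2.1) (y.1.1, y.2.1) * wernerAS (x.1.2, x.2.2) (y.1.2, y.2.2)

open Matrix in
lemma aux_eig {n : Type*} [Fintype n] [DecidableEq n] {A : Matrix n n ℂ} (h : A.IsHermitian)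
    (c d : ℝ) (hA : A * A = (c : ℂ) • A + (d : ℂ) • (1 : Matrix n n ℂ)) (i : n) :
    h.eigenvalues i ^ 2 = c * h.eigenvalues i + d := by
  have h1 := h.mulVec_eigenvectorBasis i
  set u : n → ℂ := (h.eigenvectorBasis i).ofLp with hu
  have hne : u ≠ 0 := by
    intro h0
    have : h.eigenvectorBasis i = 0 := by
      ext j
      simpa using congrFun h0 j
    exact h.eigenvectorBasis.orthonormal.ne_zero i this
  have h2 : (A * A) *ᵥ u = ((c : ℂ) • A + (d : ℂ) • (1 : Matrix n n ℂ)) *ᵥ u := by rw [hA]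
  rw [← Matrix.mulVec_mulVec, Matrix.add_mulVec, Matrix.smul_mulVec, Matrix.smul_mulVec,
    Matrix.one_mulVec, h1, Matrix.mulVec_smul, h1] at h2
  obtain ⟨j, hj⟩ := Function.ne_iff.mp hne
  have h3 := congrFun h2 j
  simp only [Pi.smul_apply, Pi.add_apply, Complex.real_smul, smul_eq_mul] at h3
  have h4 : ((h.eigenvalues i : ℂ) ^ 2 - (c * h.eigenvalues i + d)) * u j = 0 := by
    linear_combination h3
  have h5 := (mul_eq_zero.mp h4).resolve_right hj
  have h6 : (h.eigenvalues i : ℂ) ^ 2 = (c * h.eigenvalues i + d) := sub_eq_zero.mp h5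
  exact_mod_cast h6

lemma aux_psd {A B : Type*} [Fintype A] [DecidableEq A] [Fintype B] (v : A × B → ℂ) :
    (Matrix.of fun x x' => ∑ y, v (x, y) * conj (v (x', y)) : Matrix A A ℂ).PosSemidef := by
  have : (Matrix.of fun x x' => ∑ y, v (x, y) * conj (v (x', y)) : Matrix A A ℂ)
      = (Matrix.of fun x y => v (x, y)) * (Matrix.of fun x y => v (x, y)).conjTranspose := by
    ext x x'
    simp [Matrix.mul_apply]
  rw [this]
  exact Matrix.posSemidef_self_mul_conjTranspose _

lemma aux_trace {A B : Type*} [Fintype A] [DecidableEq A] [Fintype B] (v : A × B → ℂ)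
    (hv : ∑ x, ‖v x‖ ^ 2 = 1) :
    ∑ i, (aux_psd v).1.eigenvalues i = 1 := by
  have h := (aux_psd v).1.trace_eq_sum_eigenvalues
  have h2 : (Matrix.of fun x x' => ∑ y, v (x, y) * conj (v (x', y)) : Matrix A A ℂ).trace
      = ((∑ x, ‖v x‖ ^ 2 : ℝ) : ℂ) := by
    rw [Fintype.sum_prod_type]
    simp [Matrix.trace, Complex.mul_conj, Complex.normSq_eq_norm_sq]
  rw [h2, hv] at h
  apply Complex.ofReal_injective
  rw [Complex.ofReal_sum]
  exact h.symm

lemma entE_eq {A B : Type*} [Fintype A] [DecidableEq A] [Fintype B] (v : A × B → ℂ) :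
    entE v = -∑ i, (aux_psd v).1.eigenvalues i * Real.logb 2 ((aux_psd v).1.eigenvalues i) := by
  unfold entE vnEntropy
  rw [dif_pos (aux_psd v).1]

lemma entE_le {A B : Type*} [Fintype A] [DecidableEq A] [Fintype B] (v : A × B → ℂ) :
    entE v ≤ Fintype.card A * (1 / Real.log 2) := by
  rw [entE_eq, ← Finset.sum_neg_distrib]
  refine (Finset.sum_le_card_nsmul _ _ (1 / Real.log 2) ?_).trans (by simp)
  intro i _
  have h0 := (aux_psd v).eigenvalues_nonneg i
  set l := (aux_psd v).1.eigenvalues i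
  have hl2 : 0 < Real.log 2 := Real.log_pos (by norm_num)
  rw [Real.logb, ← mul_div_assoc, ← neg_div]
  gcongr
  rcases h0.eq_or_lt with h | h
  · rw [← h]; simp
  · have h1 := Real.one_sub_inv_le_log_of_pos h
    have h2 := mul_le_mul_of_nonneg_left h1 h.le
    have h3 : l * (1 - l⁻¹) = l - 1 := by field_simp
    linarith

lemma entE_lower {A B : Type*} [Fintype A] [DecidableEq A] [Fintype B] (v : A × B → ℂ)
    (hv : ∑ x, ‖v x‖ ^ 2 = 1) (hs : ∑ i, (aux_psd v).1.eigenvalues i ^ 2 = 1 / 6) :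
    5 / 2 ≤ entE v := by
  have ht := aux_trace v hv
  rw [entE_eq]
  have hl2 : 0 < Real.log 2 := Real.log_pos (by norm_num)
  have key : ∀ i, (aux_psd v).1.eigenvalues i * Real.log ((aux_psd v).1.eigenvalues i) ≤
      6 * (aux_psd v).1.eigenvalues i ^ 2 - (1 + Real.log 6) * (aux_psd v).1.eigenvalues i := by
    intro i
    have h0 := (aux_psd v).eigenvalues_nonneg i
    set l := (aux_psd v).1.eigenvalues i
    rcases h0.eq_or_lt with h | h
    · rw [← h]; simp
    · have h1 := Real.log_le_sub_one_of_pos (show 0 < 6 * l by positivity)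
      rw [Real.log_mul (by norm_num) h.ne'] at h1
      nlinarith [mul_le_mul_of_nonneg_left h1 h.le]
  have hsum := Finset.sum_le_sum (fun i (_ : i ∈ Finset.univ) => key i)
  rw [Finset.sum_sub_distrib, ← Finset.mul_sum, ← Finset.mul_sum, hs, ht] at hsum
  have h6 : 5 / 2 * Real.log 2 ≤ Real.log 6 := by
    have := Real.log_le_log (by norm_num) (show (2:ℝ)^5 ≤ 6^2 by norm_num)
    rw [Real.log_pow, Real.log_pow] at this
    push_cast at this
    linarith
  simp only [Real.logb, ← mul_div_assoc]
  rw [← Finset.sum_div, ← neg_div, le_div_iff₀ hl2]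
  linarith

lemma entE_half {A B : Type*} [Fintype A] [DecidableEq A] [Fintype B] (v : A × B → ℂ)
    (hv : ∑ x, ‖v x‖ ^ 2 = 1)
    (hs : ∀ i, (aux_psd v).1.eigenvalues i ^ 2 = 1 / 2 * (aux_psd v).1.eigenvalues i + 0) :
    entE v = 1 := by
  have ht := aux_trace v hv
  rw [entE_eq, ← ht, ← Finset.sum_neg_distrib]
  refine Finset.sum_congr rfl fun i _ => ?_
  have h := hs i
  set l := (aux_psd v).1.eigenvalues i
  have h' : l * (l - 1 / 2) = 0 := by linear_combination h
  rcases mul_eq_zero.mp h' with h | h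
  · rw [h]; simp
  · rw [sub_eq_zero.mp h]
    have : Real.logb 2 (1 / 2) = -1 := by
      rw [one_div, Real.logb_inv, Real.logb_self_eq_one (by norm_num)]
    rw [this]; norm_num

lemma entE_anti (v : Fin 3 × Fin 3 → ℂ) (hv : ∑ x, ‖v x‖ ^ 2 = 1)
    (ha : ∀ a b, v (a, b) + v (b, a) = 0) : entE v = 1 := by
  refine entE_half v hv (fun i => aux_eig _ (1/2) 0 ?_ i)
  have d : ∀ a, v (a, a) = 0 := fun a => by
    have := ha a a
    have h2 : (2 : ℂ) * v (a, a) = 0 := by linear_combination this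
    simpa using h2
  have e1 : v (1, 0) = - v (0, 1) := by linear_combination ha 0 1
  have e2 : v (2, 0) = - v (0, 2) := by linear_combination ha 0 2
  have e3 : v (2, 1) = - v (1, 2) := by linear_combination ha 1 2
  have hn : v (0,1) * conj (v (0,1)) + v (0,2) * conj (v (0,2)) + v (1,2) * conj (v (1,2))
      = 1 / 2 := by
    have h : ((∑ x, ‖v x‖ ^ 2 : ℝ) : ℂ) = 1 := by rw [hv]; simp
    push_cast at h
    simp only [← Complex.mul_conj'] at h
    rw [Fintype.sum_prod_type] at h
    simp only [Fin.sum_univ_three, d, e1, e2, e3, map_neg, map_zero] at h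
    linear_combination h / 2
  ext x y
  rw [Matrix.mul_apply]
  simp only [Matrix.add_apply, Matrix.smul_apply, Matrix.of_apply, Fin.sum_univ_three, smul_eq_mul]
  push_cast
  fin_cases x <;> fin_cases y <;>
  simp only [Fin.zero_eta, Fin.mk_one, Fin.reduceFinMk, d, e1, e2, e3, map_neg, map_zero]
  · linear_combination (v (0,1) * conj (v (0,1)) + v (0,2) * conj (v (0,2))) * hn
  · linear_combination (v (0,2) * conj (v (1,2))) * hn
  · linear_combination (-v (0,1) * conj (v (1,2))) * hn
  · linear_combination (v (1,2) * conj (v (0,2))) * hn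
  · linear_combination (v (0,1) * conj (v (0,1)) + v (1,2) * conj (v (1,2))) * hn
  · linear_combination (v (0,1) * conj (v (0,2))) * hn
  · linear_combination (-v (1,2) * conj (v (0,1))) * hn
  · linear_combination (v (0,2) * conj (v (0,1))) * hn
  · linear_combination (v (0,2) * conj (v (0,2)) + v (1,2) * conj (v (1,2))) * hn

lemma werner_anti {m : ℕ} {p : Fin m → ℝ} {v : Fin m → Fin 3 × Fin 3 → ℂ}
    (hp : ∀ i, 0 < p i)
    (h : wernerAS = ∑ i, (p i : ℂ) • Matrix.of (fun x y => v i x * conj (v i y)))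
    (i : Fin m) (a b : Fin 3) : v i (a, b) + v i (b, a) = 0 := by
  have e : ∀ x y, wernerAS x y = ∑ i, (p i : ℂ) * (v i x * conj (v i y)) := by
    intro x y
    rw [h, Matrix.sum_apply]
    simp
  have h1 : wernerAS (a,b) (a,b) + wernerAS (a,b) (b,a) + wernerAS (b,a) (a,b)
      + wernerAS (b,a) (b,a) = 0 := by
    simp only [wernerAS, Matrix.of_apply]
    by_cases hab : a = b
    · subst hab; simp
    · have hba : ¬ b = a := fun h => hab h.symm
      simp [hab, hba]
  have h2 : ((∑ i, p i * ‖v i (a, b) + v i (b, a)‖ ^ 2 : ℝ) : ℂ) = 0 := by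
    rw [← h1, e, e, e, e, ← Finset.sum_add_distrib, ← Finset.sum_add_distrib,
      ← Finset.sum_add_distrib]
    push_cast
    refine Finset.sum_congr rfl fun j _ => ?_
    rw [← Complex.mul_conj', map_add]
    ring
  have h3 : ∑ i, p i * ‖v i (a, b) + v i (b, a)‖ ^ 2 = 0 := by exact_mod_cast h2
  rw [Finset.sum_eq_zero_iff_of_nonneg (fun j _ => mul_nonneg (hp j).le (sq_nonneg _))] at h3
  have h4 := h3 i (Finset.mem_univ _)
  have h5 := (mul_eq_zero.mp h4).resolve_left (hp i).ne'
  simpa using h5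

/-- Antisymmetric integer vectors. -/
def kA (i : Fin 3) (x : Fin 3 × Fin 3) : ℤ :=
  if x.1 = i ∧ x.2 = i + 1 then 1 else if x.2 = i ∧ x.1 = i + 1 then -1 else 0

lemma kA_sum : ∀ x y : Fin 3 × Fin 3, ∑ i, kA i x * kA i y =
    ((if x.1 = y.1 ∧ x.2 = y.2 then 1 else 0) - (if x.1 = y.2 ∧ x.2 = y.1 then 1 else 0)) := by
  decide +kernel

lemma kA_norm : ∀ i, ∑ x, kA i x ^ 2 = 2 := by decide +kernel

/-- signs -/
def sg (i : Fin 12) (a : Fin 3) : ℤ :=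
  if (a = 1 ∧ i.val / 3 % 2 = 1) ∨ (a = 2 ∧ i.val / 6 = 1) then -1 else 1

/-- cyclic shift -/
def sh (i : Fin 12) (a : Fin 3) : Fin 3 :=
  if i.val % 3 = 0 then a else if i.val % 3 = 1 then a + 1 else a + 2

/-- maximally entangled direction -/
def kw (i : Fin 12) (x : Fin 3 × Fin 3) : ℤ :=
  if x.1 = sh i x.2 then sg i x.1 else 0

/-- coefficient matrices -/
def kT (i : Fin 12) (x : (Fin 3 × Fin 3) × (Fin 3 × Fin 3)) : ℤ :=
  kw i x.1 * kw i x.2 -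
    (if x.1.1 = sh i x.2.2 ∧ x.2.1 = sh i x.1.2 then sg i x.1.1 * sg i x.2.1 else 0)

/-- coefficients in the antisymmetric basis -/
def kM (i : Fin 12) (a : Fin 3 × Fin 3) : ℤ := kT i (a, (a.1 + 1, a.2 + 1))

lemma kT_fac : ∀ i x, kT i x =
    ∑ a : Fin 3 × Fin 3, kA a.1 (x.1.1, x.2.1) * kA a.2 (x.1.2, x.2.2) * kM i a := by
  decide +kernel

lemma kM_sum : ∀ a b, ∑ i, kM i a * kM i b = if a = b then 4 else 0 := by
  decide +kernel

lemma kT_sum (x y : (Fin 3 × Fin 3) × (Fin 3 × Fin 3)) : ∑ i, kT i x * kT i y =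
    4 * (((if x.1.1 = y.1.1 ∧ x.2.1 = y.2.1 then 1 else 0)
      - (if x.1.1 = y.2.1 ∧ x.2.1 = y.1.1 then 1 else 0)) *
    ((if x.1.2 = y.1.2 ∧ x.2.2 = y.2.2 then 1 else 0)
      - (if x.1.2 = y.2.2 ∧ x.2.2 = y.1.2 then 1 else 0))) := by
  have h1 := kA_sum (x.1.1, x.2.1) (y.1.1, y.2.1)
  have h2 := kA_sum (x.1.2, x.2.2) (y.1.2, y.2.2)
  simp only at h1 h2
  rw [← h1, ← h2, Finset.sum_mul_sum, ← Fintype.sum_prod_type', Finset.mul_sum]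
  simp only [kT_fac _ x, kT_fac _ y, Finset.sum_mul_sum]
  rw [Finset.sum_comm]
  refine Finset.sum_congr rfl fun a _ => ?_
  rw [Finset.sum_comm]
  have h3 : ∀ b : Fin 3 × Fin 3, ∑ i, kA a.1 (x.1.1, x.2.1) * kA a.2 (x.1.2, x.2.2) * kM i a *
      (kA b.1 (y.1.1, y.2.1) * kA b.2 (y.1.2, y.2.2) * kM i b) =
      if a = b then 4 * (kA a.1 (x.1.1, x.2.1) * kA a.1 (y.1.1, y.2.1) *
        (kA a.2 (x.1.2, x.2.2) * kA a.2 (y.1.2, y.2.2))) else 0 := by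
    intro b
    have h4 := kM_sum a b
    calc _ = (kA a.1 (x.1.1, x.2.1) * kA a.2 (x.1.2, x.2.2) *
        (kA b.1 (y.1.1, y.2.1) * kA b.2 (y.1.2, y.2.2))) * ∑ i, kM i a * kM i b := by
          rw [Finset.mul_sum]
          refine Finset.sum_congr rfl fun i _ => ?_
          ring
      _ = _ := by
          rw [h4]
          by_cases hab : a = b
          · subst hab; simp; ring
          · simp [hab]
  rw [Finset.sum_congr rfl fun b _ => h3 b]
  simp

lemma kT_norm : ∀ i, ∑ x, kT i x ^ 2 = 12 := by decide +kernel

lemma kT_red : ∀ i, ∀ x x', ∑ y, kT i (x, y) * kT i (x', y) =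
    (if x = x' then 1 else 0) + kw i x * kw i x' := by decide +kernel

lemma kw_norm : ∀ i, ∑ x, kw i x * kw i x = 3 := by decide +kernel

/-- the vectors of the decomposition -/
noncomputable def vT (i : Fin 12) (x : (Fin 3 × Fin 3) × (Fin 3 × Fin 3)) : ℂ :=
  (kT i x : ℂ) * ((√12)⁻¹ : ℝ)

lemma r12 : (((√12)⁻¹ : ℝ) : ℂ) * ((√12)⁻¹ : ℝ) = 1 / 12 := by
  rw [← Complex.ofReal_mul, ← mul_inv, Real.mul_self_sqrt (by norm_num)]
  norm_num

lemma vT_mul (i : Fin 12) (x y) : vT i x * conj (vT i y) = ((kT i x * kT i y : ℤ) : ℂ) / 12 := by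
  unfold vT
  rw [map_mul, Complex.conj_ofReal, map_intCast]
  push_cast
  have := r12
  push_cast at this
  linear_combination (kT i x * kT i y : ℂ) * this

lemma vT_norm (i : Fin 12) : ∑ x, ‖vT i x‖ ^ 2 = 1 := by
  have h : ((∑ x, ‖vT i x‖ ^ 2 : ℝ) : ℂ) = 1 := by
    push_cast
    simp only [← Complex.mul_conj', vT_mul]
    rw [← Finset.sum_div, ← Int.cast_sum]
    have := kT_norm i
    simp only [pow_two] at this
    rw [this]; norm_num
  exact_mod_cast h

lemma vT_sq (i : Fin 12) : ∑ j, (aux_psd (vT i)).1.eigenvalues j ^ 2 = 1 / 6 := by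
  have h : ∀ j, (aux_psd (vT i)).1.eigenvalues j ^ 2 =
      (5/12) * (aux_psd (vT i)).1.eigenvalues j + (-1/36) := by
    refine fun j => aux_eig _ (5/12) (-1/36) ?_ j
    ext x y
    rw [Matrix.mul_apply]
    simp only [Matrix.add_apply, Matrix.smul_apply, Matrix.of_apply, vT_mul, ← Finset.sum_div,
      ← Int.cast_sum, kT_red, Matrix.one_apply, smul_eq_mul]
    have hw : (∑ z, (kw i z : ℂ) * (kw i z : ℂ)) = 3 := by exact_mod_cast kw_norm i
    have e1 : ∀ z, (((((if x = z then 1 else 0) + kw i x * kw i z : ℤ)) : ℂ) / 12) *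
        (((((if z = y then 1 else 0) + kw i z * kw i y : ℤ)) : ℂ) / 12) =
        (1/144) * ((if x = z then (if x = y then 1 else 0) else 0)
          + (if x = z then (kw i x * kw i y : ℂ) else 0)
          + (if z = y then (kw i x * kw i y : ℂ) else 0)
          + kw i x * kw i y * (kw i z * kw i z : ℂ)) := by
      intro z
      by_cases h1 : x = z
      · subst h1
        by_cases h2 : x = y
        · subst h2; simp; ring
        · simp [h2]; ring
      · by_cases h2 : z = y
        · subst h2; simp [h1]; ring
        · simp [h1, h2]; ring
    rw [Finset.sum_congr rfl fun z _ => e1 z, ← Finset.mul_sum, Finset.sum_add_distrib,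
      Finset.sum_add_distrib, Finset.sum_add_distrib, ← Finset.mul_sum, hw]
    simp only [Finset.sum_ite_eq, Finset.sum_ite_eq', Finset.mem_univ, if_true]
    push_cast
    by_cases h2 : x = y
    · simp [h2]; ring
    · simp [h2]; ring
  rw [Finset.sum_congr rfl fun j _ => h j, Finset.sum_add_distrib, ← Finset.mul_sum,
    aux_trace _ (vT_norm i)]
  simp
  norm_num

lemma werner_two_dec : wernerTwo =
    ∑ i, (((fun _ => 1/12 : Fin 12 → ℝ) i : ℝ) : ℂ) •
      Matrix.of (fun x y => vT i x * conj (vT i y)) := by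
  ext x y
  rw [Matrix.sum_apply]
  simp only [Matrix.smul_apply, Matrix.of_apply, vT_mul, smul_eq_mul]
  rw [← Finset.mul_sum, ← Finset.sum_div, ← Int.cast_sum, kT_sum]
  simp only [wernerTwo, wernerAS, Matrix.of_apply]
  push_cast
  ring

/-- vectors decomposing one copy -/
noncomputable def vA (i : Fin 3) (x : Fin 3 × Fin 3) : ℂ :=
  (kA i x : ℂ) * ((√2)⁻¹ : ℝ)

lemma r2 : (((√2)⁻¹ : ℝ) : ℂ) * ((√2)⁻¹ : ℝ) = 1 / 2 := by
  rw [← Complex.ofReal_mul, ← mul_inv, Real.mul_self_sqrt (by norm_num)]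
  norm_num

lemma vA_mul (i : Fin 3) (x y) : vA i x * conj (vA i y) = ((kA i x * kA i y : ℤ) : ℂ) / 2 := by
  unfold vA
  rw [map_mul, Complex.conj_ofReal, map_intCast]
  push_cast
  have := r2
  push_cast at this
  linear_combination (kA i x * kA i y : ℂ) * this

lemma vA_norm (i : Fin 3) : ∑ x, ‖vA i x‖ ^ 2 = 1 := by
  have h : ((∑ x, ‖vA i x‖ ^ 2 : ℝ) : ℂ) = 1 := by
    push_cast
    simp only [← Complex.mul_conj', vA_mul]
    rw [← Finset.sum_div, ← Int.cast_sum]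
    have := kA_norm i
    simp only [pow_two] at this
    rw [this]; norm_num
  exact_mod_cast h

lemma werner_dec : wernerAS =
    ∑ i, (((fun _ => 1/3 : Fin 3 → ℝ) i : ℝ) : ℂ) •
      Matrix.of (fun x y => vA i x * conj (vA i y)) := by
  ext x y
  rw [Matrix.sum_apply]
  simp only [Matrix.smul_apply, Matrix.of_apply, vA_mul, smul_eq_mul]
  rw [← Finset.mul_sum, ← Finset.sum_div, ← Int.cast_sum, kA_sum]
  simp only [wernerAS, Matrix.of_apply]
  push_cast
  ring

lemma eoa_one : EoA wernerAS = 1 := by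
  have : {e : ℝ | ∃ (m : ℕ) (p : Fin m → ℝ) (v : Fin m → Fin 3 × Fin 3 → ℂ),
    (∀ i, 0 < p i) ∧ (∑ i, p i = 1) ∧ (∀ i, ∑ x, ‖v i x‖ ^ 2 = 1) ∧
    wernerAS = ∑ i, (p i : ℂ) • Matrix.of (fun x y => v i x * conj (v i y)) ∧
    e = ∑ i, p i * entE (v i)} = {1} := by
    have key : ∀ (m : ℕ) (p : Fin m → ℝ) (v : Fin m → Fin 3 × Fin 3 → ℂ),
      (∀ i, 0 < p i) → (∑ i, p i = 1) → (∀ i, ∑ x, ‖v i x‖ ^ 2 = 1) →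
      wernerAS = ∑ i, (p i : ℂ) • Matrix.of (fun x y => v i x * conj (v i y)) →
      ∑ i, p i * entE (v i) = 1 := by
      intro m p v hp hs hn hd
      rw [← hs]
      refine Finset.sum_congr rfl fun i _ => ?_
      rw [entE_anti (v i) (hn i) (werner_anti hp hd i), mul_one]
    ext e
    simp only [Set.mem_ofPred_eq, Set.mem_singleton_iff]
    constructor
    · rintro ⟨m, p, v, hp, hs, hn, hd, rfl⟩
      exact key m p v hp hs hn hd
    · rintro rfl
      exact ⟨3, fun _ => 1/3, vA, fun _ => by norm_num, by simp, vA_norm, werner_dec,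
        (key 3 (fun _ => 1/3) vA (fun _ => by norm_num) (by simp) vA_norm werner_dec).symm⟩
  unfold EoA
  rw [this, csSup_singleton]

lemma two_bound : (5 / 2 : ℝ) ≤ ∑ i, (fun _ => 1/12 : Fin 12 → ℝ) i * entE (vT i) := by
  have h : ∀ i ∈ (Finset.univ : Finset (Fin 12)), (1/12 : ℝ) * (5/2) ≤
      (fun _ => 1/12 : Fin 12 → ℝ) i * entE (vT i) := fun i _ =>
    mul_le_mul_of_nonneg_left (entE_lower _ (vT_norm i) (vT_sq i)) (by norm_num)
  refine le_trans ?_ (Finset.sum_le_sum h)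
  simp

lemma eoa_two : 5 / 2 ≤ EoA wernerTwo := by
  refine two_bound.trans (le_csSup ?_
    ⟨12, fun _ => 1/12, vT, fun _ => by norm_num, by simp, vT_norm, werner_two_dec, rfl⟩)
  refine ⟨Fintype.card (Fin 3 × Fin 3) * (1 / Real.log 2), ?_⟩
  rintro e ⟨m, p, v, hp, hs, hn, hd, rfl⟩
  calc ∑ i, p i * entE (v i)
      ≤ ∑ i, p i * (Fintype.card (Fin 3 × Fin 3) * (1 / Real.log 2)) :=
        Finset.sum_le_sum fun i _ => mul_le_mul_of_nonneg_left (entE_le _) (hp i).le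
    _ = _ := by rw [← Finset.sum_mul, hs, one_mul]


/-- superadditivity of the entanglement of assistance.  Two copies of
the 3×3 antisymmetric Werner state admit a pure-state decomposition with average
entanglement at least `5/2`; in particular `EoA(σ) ≥ 5/2 > 2 = 2·EoA(ρ)`. -/
theorem eoa_superadditive :
    (∃ (m : ℕ) (p : Fin m → ℝ) (v : Fin m → (Fin 3 × Fin 3) × (Fin 3 × Fin 3) → ℂ),
      (∀ i, 0 < p i) ∧ (∑ i, p i = 1) ∧ (∀ i, ∑ x, ‖v i x‖ ^ 2 = 1) ∧
      wernerTwo = ∑ i, (p i : ℂ) • Matrix.of (fun x y => v i x * conj (v i y)) ∧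
      5/2 ≤ ∑ i, p i * entE (v i)) ∧
    5/2 ≤ EoA wernerTwo ∧ EoA wernerAS = 1 ∧ 2 * EoA wernerAS < EoA wernerTwo := by
  refine ⟨⟨12, fun _ => 1/12, vT, fun _ => by norm_num, by simp, vT_norm, werner_two_dec,
    two_bound⟩, eoa_two, eoa_one, ?_⟩
  have h := eoa_two
  rw [eoa_one]
  linarith
end

section
/- Entanglement of formation of a mixture of two Bell states: let α, β ≥ 0 with α² + β² = 1, let Φ⁺ = (1/√2)(|00⟩ + |11⟩) and Φ⁻ = (1/√2)(|00⟩ − |11⟩) in ℂ²⊗ℂ² (indexed by Fin 2 × Fin 2), and let ρ = α²·Φ⁺(Φ⁺)† + β²·Φ⁻(Φ⁻)†. Then the entanglement of formation of ρ equals H₂(1/2 − αβ). -/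
open scoped ComplexConjugate ComplexOrder

/-- The binary entropy `H₂(x) = −x log₂ x − (1−x) log₂ (1−x)`. -/
noncomputable def binEnt (x : ℝ) : ℝ :=
  -(x * Real.logb 2 x) - (1 - x) * Real.logb 2 (1 - x)

/-- The Bell state `Φ⁺ = (1/√2)(|00⟩ + |11⟩)`. -/
noncomputable def PhiPlus : Fin 2 × Fin 2 → ℂ :=
  fun x => if x.1 = x.2 then ((1 / Real.sqrt 2 : ℝ) : ℂ) else 0

/-- The Bell state `Φ⁻ = (1/√2)(|00⟩ − |11⟩)`. -/
noncomputable def PhiMinus : Fin 2 × Fin 2 → ℂ :=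
  fun x => if x = (0, 0) then ((1 / Real.sqrt 2 : ℝ) : ℂ)
    else if x = (1, 1) then -((1 / Real.sqrt 2 : ℝ) : ℂ) else 0

lemma binEnt_eq (x : ℝ) : binEnt x = Real.binEntropy x / Real.log 2 := by
  unfold binEnt Real.binEntropy Real.logb
  rw [Real.log_inv, Real.log_inv]; ring

lemma binEnt_symm (x : ℝ) : binEnt (1 - x) = binEnt x := by
  unfold binEnt; rw [sub_sub_cancel]; ring

lemma entE_diag (v : Fin 2 × Fin 2 → ℂ) (h1 : v (0, 1) = 0) (h2 : v (1, 0) = 0)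
    (hn : ∑ x, ‖v x‖ ^ 2 = 1) :
    ‖v (0,0)‖ ^ 2 + ‖v (1,1)‖ ^ 2 = 1 ∧ entE v = binEnt (‖v (0, 0)‖ ^ 2) := by
  have hs : ‖v (0,0)‖ ^ 2 + ‖v (1,1)‖ ^ 2 = 1 := by
    rw [Fintype.sum_prod_type] at hn
    simpa [Fin.sum_univ_two, h1, h2] using hn
  refine ⟨hs, ?_⟩
  unfold entE vnEntropy
  set M : Matrix (Fin 2) (Fin 2) ℂ :=
    Matrix.of fun x x' => ∑ y, v (x, y) * conj (v (x', y)) with hM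
  have e00 : M 0 0 = ((‖v (0,0)‖ ^ 2 : ℝ) : ℂ) := by
    simp [hM, Fin.sum_univ_two, h1, Complex.mul_conj']
  have e11 : M 1 1 = ((‖v (1,1)‖ ^ 2 : ℝ) : ℂ) := by
    simp [hM, Fin.sum_univ_two, h2, Complex.mul_conj']
  have e01 : M 0 1 = 0 := by simp [hM, Fin.sum_univ_two, h1, h2]
  have e10 : M 1 0 = 0 := by simp [hM, Fin.sum_univ_two, h1, h2]
  have hH : M.IsHermitian := by
    ext i j
    fin_cases i <;> fin_cases j <;>
      simp [Matrix.conjTranspose_apply, e00, e11, e01, e10]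
  rw [dif_pos hH]
  have ht := hH.trace_eq_sum_eigenvalues
  have hd := hH.det_eq_prod_eigenvalues
  rw [Matrix.trace_fin_two, e00, e11, Fin.sum_univ_two] at ht
  rw [Matrix.det_fin_two, e00, e11, e01, Fin.prod_univ_two] at hd
  set a := ‖v (0,0)‖ ^ 2
  set b := ‖v (1,1)‖ ^ 2
  rw [Fin.sum_univ_two]
  generalize hH.eigenvalues 0 = x at *
  generalize hH.eigenvalues 1 = y at *
  have ht' : a + b = x + y := by
    have : ((a + b : ℝ) : ℂ) = ((x + y : ℝ) : ℂ) := by push_cast; simpa using ht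
    exact_mod_cast this
  have hd' : a * b = x * y := by
    have : ((a * b : ℝ) : ℂ) = ((x * y : ℝ) : ℂ) := by push_cast; simpa using hd
    exact_mod_cast this
  have hb : b = 1 - a := by linarith
  have hy : y = 1 - x := by linarith
  subst hy
  rw [hb] at hd'
  have : (x - a) * (x - (1 - a)) = 0 := by linarith
  unfold binEnt
  rcases mul_eq_zero.1 this with h | h
  · have : x = a := by linarith
    rw [this]; ring
  · have : x = 1 - a := by linarith
    rw [this, sub_sub_cancel]; ring

lemma log_bound {t : ℝ} (h0 : 0 < t) (h1 : t < 1) :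
    2 * t ≤ Real.log (1 + t) - Real.log (1 - t) := by
  have h : 0 < 1 - t := by linarith
  have hx : 0 ≤ 2 * t / (1 - t) := by positivity
  have := Real.le_log_one_add_of_nonneg hx
  rw [← Real.log_div (by linarith) h.ne']
  have e1 : 1 + 2 * t / (1 - t) = (1 + t) / (1 - t) := by field_simp; ring
  have e2 : 2 * (2 * t / (1 - t)) / (2 * t / (1 - t) + 2) = 2 * t := by
    field_simp; ring
  rwa [e1, e2] at this

noncomputable def gg (t : ℝ) : ℝ :=
  Real.sqrt (1 - t ^ 2) * (Real.log (1 + t) - Real.log (1 - t)) / t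

lemma gg_anti : AntitoneOn gg (Set.Ioo 0 1) := by
  have key : ∀ t ∈ Set.Ioo (0:ℝ) 1, ∃ d, HasDerivAt gg d t ∧ d ≤ 0 := by
    rintro t ⟨h0, h1⟩
    have hp : 0 < 1 - t ^ 2 := by nlinarith
    have d1 : HasDerivAt (fun t : ℝ => 1 - t ^ 2) (-(2 * t)) t := by
      simpa using ((hasDerivAt_id t).pow 2).const_sub 1
    have d2 := d1.sqrt hp.ne'
    have d3 : HasDerivAt (fun t : ℝ => Real.log (1 + t)) (1 / (1 + t)) t :=
      ((hasDerivAt_id t).const_add 1).log (by simp; linarith)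
    have d4 : HasDerivAt (fun t : ℝ => Real.log (1 - t)) (-1 / (1 - t)) t :=
      ((hasDerivAt_id t).const_sub 1).log (by simp; linarith)
    have d5 := (d2.mul (d3.sub d4)).div (hasDerivAt_id t) h0.ne'
    refine ⟨_, d5, ?_⟩
    simp only [id, Pi.mul_apply, Pi.sub_apply]
    apply div_nonpos_of_nonpos_of_nonneg _ (by positivity)
    have hb := log_bound h0 h1
    set L := Real.log (1 + t) - Real.log (1 - t)
    have hs : 0 < Real.sqrt (1 - t ^ 2) := Real.sqrt_pos.2 hp
    have hsq : Real.sqrt (1 - t ^ 2) ^ 2 = 1 - t ^ 2 := Real.sq_sqrt hp.le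
    set s := Real.sqrt (1 - t ^ 2)
    have e : 1 / (1 + t) - -1 / (1 - t) = 2 / s ^ 2 := by
      rw [hsq]
      have : 1 - t ≠ 0 := by linarith
      have : 1 + t ≠ 0 := by linarith
      field_simp
      ring
    rw [e]
    have : (-(2 * t) / (2 * s) * L + s * (2 / s ^ 2)) * t - s * L * 1
        = (2 * t - L * (t ^ 2 + s ^ 2)) / s := by
      field_simp; ring
    rw [this, hsq]
    apply div_nonpos_of_nonpos_of_nonneg _ hs.le
    linarith
  apply antitoneOn_of_deriv_nonpos (convex_Ioo 0 1)
  · intro t ht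
    obtain ⟨d, hd, -⟩ := key t ht
    exact hd.continuousAt.continuousWithinAt
  · intro t ht
    rw [interior_Ioo] at ht
    obtain ⟨d, hd, -⟩ := key t ht
    exact hd.differentiableAt.differentiableWithinAt
  · intro t ht
    rw [interior_Ioo] at ht
    obtain ⟨d, hd, h⟩ := key t ht
    rwa [hd.deriv]

noncomputable def ff (c : ℝ) : ℝ := Real.binEntropy ((1 - Real.sqrt (1 - c ^ 2)) / 2)

lemma ff_convex : ConvexOn ℝ (Set.Icc 0 1) ff := by
  have key : ∀ c ∈ Set.Ioo (0:ℝ) 1,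
      HasDerivAt ff (gg (Real.sqrt (1 - c ^ 2)) / 2) c := by
    rintro c ⟨h0, h1⟩
    have hp : 0 < 1 - c ^ 2 := by nlinarith
    have d1 : HasDerivAt (fun t : ℝ => 1 - t ^ 2) (-(2 * c)) c := by
      simpa using ((hasDerivAt_id c).pow 2).const_sub 1
    have d2 := ((d1.sqrt hp.ne').const_sub 1).div_const 2
    have hs : 0 < Real.sqrt (1 - c ^ 2) := Real.sqrt_pos.2 hp
    have hsq : Real.sqrt (1 - c ^ 2) ^ 2 = 1 - c ^ 2 := Real.sq_sqrt hp.le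
    have hs1 : Real.sqrt (1 - c ^ 2) < 1 := by nlinarith
    have d3 := Real.hasDerivAt_binEntropy (p := (1 - Real.sqrt (1 - c ^ 2)) / 2)
      (by linarith) (by linarith)
    have d4 := d3.comp c d2
    refine d4.congr_deriv ?_
    unfold gg
    rw [hsq]
    set s := Real.sqrt (1 - c ^ 2)
    have e0 : (1:ℝ) - (1 - c ^ 2) = c ^ 2 := by ring
    have e1 : 1 - (1 - s) / 2 = (1 + s) / 2 := by ring
    rw [e0, Real.sqrt_sq h0.le, e1, Real.log_div (by linarith) two_ne_zero,
      Real.log_div (by linarith) two_ne_zero]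
    field_simp
    ring
  apply MonotoneOn.convexOn_of_deriv (convex_Icc 0 1)
  · apply Continuous.continuousOn
    unfold ff
    exact Real.binEntropy_continuous.comp (by fun_prop)
  · intro c hc
    rw [interior_Icc] at hc
    exact (key c hc).differentiableAt.differentiableWithinAt
  · rw [interior_Icc]
    intro x hx y hy hxy
    rw [(key x hx).deriv, (key y hy).deriv]
    have mem : ∀ c ∈ Set.Ioo (0:ℝ) 1, Real.sqrt (1 - c ^ 2) ∈ Set.Ioo (0:ℝ) 1 := by
      rintro c ⟨h0, h1⟩
      have hp : 0 < 1 - c ^ 2 := by nlinarith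
      refine ⟨Real.sqrt_pos.2 hp, ?_⟩
      rw [Real.sqrt_lt' one_pos]; nlinarith
    have := gg_anti (mem y hy) (mem x hx) (Real.sqrt_le_sqrt (by nlinarith [hx.1, hy.1]))
    linarith

lemma ff_mono : MonotoneOn ff (Set.Icc 0 1) := by
  have mem : ∀ c ∈ Set.Icc (0:ℝ) 1,
      (1 - Real.sqrt (1 - c ^ 2)) / 2 ∈ Set.Icc (0:ℝ) 2⁻¹ := by
    rintro c ⟨h0, h1⟩
    have : Real.sqrt (1 - c ^ 2) ≤ 1 := by
      rw [Real.sqrt_le_iff]; constructor <;> nlinarith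
    have := Real.sqrt_nonneg (1 - c ^ 2)
    constructor <;> norm_num <;> linarith
  intro x hx y hy hxy
  apply Real.binEntropy_strictMonoOn.monotoneOn (mem x hx) (mem y hy)
  have := Real.sqrt_le_sqrt (show 1 - y ^ 2 ≤ 1 - x ^ 2 by nlinarith [hx.1, hy.1])
  linarith

lemma ff_eq {a b : ℝ} (h : a ^ 2 + b ^ 2 = 1) :
    ff (2 * (a * b)) = Real.binEntropy (a ^ 2) := by
  unfold ff
  have : 1 - (2 * (a * b)) ^ 2 = (1 - 2 * a ^ 2) ^ 2 := by
    have : b ^ 2 = 1 - a ^ 2 := by linarith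
    rw [mul_pow, mul_pow, this]; ring
  rw [this, Real.sqrt_sq_eq_abs]
  rcases abs_cases (1 - 2 * a ^ 2) with ⟨h, _⟩ | ⟨h, _⟩
  · rw [h]; congr 1; ring
  · rw [h, ← Real.binEntropy_one_sub]; congr 1; ring

lemma sqrt_half_sq : ((1 / Real.sqrt 2 : ℝ)) ^ 2 = 1 / 2 := by
  rw [div_pow, Real.sq_sqrt (by norm_num)]; norm_num

lemma lower_bound (α β : ℝ) (hα : 0 ≤ α) (hβ : 0 ≤ β) (hab : α ^ 2 + β ^ 2 = 1)
    (m : ℕ) (p : Fin m → ℝ) (v : Fin m → Fin 2 × Fin 2 → ℂ)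
    (hp : ∀ i, 0 < p i) (hp1 : ∑ i, p i = 1) (hv : ∀ i, ∑ x, ‖v i x‖ ^ 2 = 1)
    (hρ : ((α ^ 2 : ℂ) • Matrix.of (fun x y => PhiPlus x * conj (PhiPlus y))
       + (β ^ 2 : ℂ) • Matrix.of (fun x y => PhiMinus x * conj (PhiMinus y)))
      = ∑ i, (p i : ℂ) • Matrix.of (fun x y => v i x * conj (v i y))) :
    binEnt (1/2 - α * β) ≤ ∑ i, p i * entE (v i) := by
  have ent : ∀ x y, (α ^ 2 : ℂ) * (PhiPlus x * conj (PhiPlus y))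
       + (β ^ 2 : ℂ) * (PhiMinus x * conj (PhiMinus y))
      = ∑ i, (p i : ℂ) * (v i x * conj (v i y)) := by
    intro x y
    have := congrFun (congrFun hρ x) y
    simpa [Matrix.sum_apply] using this
  have zero : ∀ x, PhiPlus x = 0 → PhiMinus x = 0 → ∀ i, v i x = 0 := by
    intro x h1 h2 i
    have := ent x x
    rw [h1, h2] at this
    have h3 : (0:ℝ) = ∑ i, p i * ‖v i x‖ ^ 2 := by
      have h4 : ((0:ℝ):ℂ) = ((∑ i, p i * ‖v i x‖ ^ 2 : ℝ) : ℂ) := by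
        push_cast
        simpa [Complex.mul_conj'] using this
      exact_mod_cast h4
    have h5 := (Finset.sum_eq_zero_iff_of_nonneg
      (fun i _ => mul_nonneg (hp i).le (sq_nonneg ‖v i x‖))).1 h3.symm i (Finset.mem_univ i)
    rcases mul_eq_zero.1 h5 with h | h
    · exact absurd h (hp i).ne'
    · simpa using h
  have z1 := zero (0,1) (by simp [PhiPlus]) (by simp [PhiMinus])
  have z2 := zero (1,0) (by simp [PhiPlus]) (by simp [PhiMinus])
  have hE := fun i => entE_diag (v i) (z1 i) (z2 i) (hv i)
  have off : |α ^ 2 - β ^ 2| ≤ ∑ i, p i * (2 * (‖v i (0,0)‖ * ‖v i (1,1)‖)) := by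
    have h := ent (0,0) (1,1)
    have e : (α ^ 2 : ℂ) * (PhiPlus (0,0) * conj (PhiPlus (1,1)))
       + (β ^ 2 : ℂ) * (PhiMinus (0,0) * conj (PhiMinus (1,1)))
       = (((α ^ 2 - β ^ 2) / 2 : ℝ) : ℂ) := by
      have h2 : (((1 / Real.sqrt 2 : ℝ)) : ℂ) ^ 2 = 1 / 2 := by
        rw [← Complex.ofReal_pow, sqrt_half_sq]; push_cast; rfl
      have a1 : PhiPlus (0,0) = ((1 / Real.sqrt 2 : ℝ) : ℂ) := by simp [PhiPlus]
      have a2 : PhiPlus (1,1) = ((1 / Real.sqrt 2 : ℝ) : ℂ) := by simp [PhiPlus]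
      have a3 : PhiMinus (0,0) = ((1 / Real.sqrt 2 : ℝ) : ℂ) := by simp [PhiMinus]
      have a4 : PhiMinus (1,1) = -((1 / Real.sqrt 2 : ℝ) : ℂ) := by simp [PhiMinus]
      rw [a1, a2, a3, a4, map_neg, Complex.conj_ofReal]
      push_cast at h2 ⊢
      linear_combination ((α:ℂ) ^ 2 - (β:ℂ) ^ 2) * h2
    rw [e] at h
    have h' := congrArg norm h
    rw [Complex.norm_real, Real.norm_eq_abs, abs_div, abs_two] at h'
    have h3 := norm_sum_le Finset.univ
      (fun i => (p i : ℂ) * (v i (0,0) * conj (v i (1,1))))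
    rw [← h'] at h3
    have h4 : ∑ i, p i * (2 * (‖v i (0,0)‖ * ‖v i (1,1)‖))
        = 2 * ∑ i, ‖(p i : ℂ) * (v i (0,0) * conj (v i (1,1)))‖ := by
      rw [Finset.mul_sum]
      refine Finset.sum_congr rfl fun i _ => ?_
      rw [norm_mul, norm_mul, Complex.norm_real, Real.norm_of_nonneg (hp i).le, RCLike.norm_conj]
      ring
    rw [h4]; linarith
  have hC : ∀ i, 2 * (‖v i (0,0)‖ * ‖v i (1,1)‖) ∈ Set.Icc (0:ℝ) 1 := by
    intro i
    refine ⟨by positivity, ?_⟩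
    nlinarith [(hE i).1, sq_nonneg (‖v i (0,0)‖ - ‖v i (1,1)‖)]
  have J := ff_convex.map_sum_le (t := Finset.univ) (w := p)
    (p := fun i => 2 * (‖v i (0,0)‖ * ‖v i (1,1)‖)) (fun i _ => (hp i).le) hp1 (fun i _ => hC i)
  have hmem := (convex_Icc (0:ℝ) 1).sum_mem (t := Finset.univ) (w := p)
    (z := fun i => 2 * (‖v i (0,0)‖ * ‖v i (1,1)‖)) (fun i _ => (hp i).le) hp1 (fun i _ => hC i)
  simp only [smul_eq_mul] at J hmem
  have M := ff_mono ⟨abs_nonneg _, off.trans hmem.2⟩ hmem off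
  have f0 : ff |α ^ 2 - β ^ 2| = Real.binEntropy (1/2 - α * β) := by
    unfold ff
    have : 1 - |α ^ 2 - β ^ 2| ^ 2 = (2 * (α * β)) ^ 2 := by
      rw [sq_abs]
      have : β ^ 2 = 1 - α ^ 2 := by linarith
      rw [mul_pow, mul_pow, this]; ring
    rw [this, Real.sqrt_sq (by positivity)]
    congr 1; ring
  have S : ∑ i, p i * entE (v i) =
      (∑ i, p i * ff (2 * (‖v i (0,0)‖ * ‖v i (1,1)‖))) / Real.log 2 := by
    rw [Finset.sum_div]
    refine Finset.sum_congr rfl fun i _ => ?_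
    rw [(hE i).2, binEnt_eq, ff_eq (hE i).1]; ring
  rw [S, binEnt_eq, ← f0]
  exact div_le_div_of_nonneg_right (M.trans J) (Real.log_nonneg (by norm_num))

noncomputable def ww (α β : ℝ) : Fin 2 × Fin 2 → ℂ :=
  fun x => α * PhiPlus x + β * PhiMinus x

lemma ww_facts (α β : ℝ) (hab : α ^ 2 + β ^ 2 = 1) :
    ∑ x, ‖ww α β x‖ ^ 2 = 1 ∧ entE (ww α β) = binEnt (1/2 + α * β) := by
  have h01 : ww α β (0,1) = 0 := by simp [ww, PhiPlus, PhiMinus]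
  have h10 : ww α β (1,0) = 0 := by simp [ww, PhiPlus, PhiMinus]
  have h00 : ‖ww α β (0,0)‖ ^ 2 = 1 / 2 + α * β := by
    have : ww α β (0,0) = (((α + β) * (1 / Real.sqrt 2) : ℝ) : ℂ) := by
      simp [ww, PhiPlus, PhiMinus]; ring
    rw [this, Complex.norm_real, Real.norm_eq_abs, sq_abs, mul_pow, sqrt_half_sq]
    linarith
  have h11 : ‖ww α β (1,1)‖ ^ 2 = 1 / 2 - α * β := by
    have : ww α β (1,1) = (((α - β) * (1 / Real.sqrt 2) : ℝ) : ℂ) := by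
      simp [ww, PhiPlus, PhiMinus]; ring
    rw [this, Complex.norm_real, Real.norm_eq_abs, sq_abs, mul_pow, sqrt_half_sq]
    linarith
  have hn : ∑ x, ‖ww α β x‖ ^ 2 = 1 := by
    rw [Fintype.sum_prod_type]
    simp only [Fin.sum_univ_two, h01, h10, h00, h11]
    norm_num
  refine ⟨hn, ?_⟩
  rw [(entE_diag _ h01 h10 hn).2, h00]

/-- the entanglement of formation of the mixture
`ρ = α²·Φ⁺(Φ⁺)† + β²·Φ⁻(Φ⁻)†` equals `H₂(1/2 − αβ)`. -/
theorem eof_bell_mixture (α β : ℝ) (hα : 0 ≤ α) (hβ : 0 ≤ β)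
    (hab : α ^ 2 + β ^ 2 = 1) :
    EoF ((α ^ 2 : ℂ) • Matrix.of (fun x y => PhiPlus x * conj (PhiPlus y))
       + (β ^ 2 : ℂ) • Matrix.of (fun x y => PhiMinus x * conj (PhiMinus y)))
      = binEnt (1/2 - α * β) := by
  unfold EoF
  apply IsLeast.csInf_eq
  constructor
  · have hab' : α ^ 2 + (-β) ^ 2 = 1 := by rw [neg_sq]; exact hab
    refine ⟨2, fun _ => 1 / 2, ![ww α β, ww α (-β)], fun _ => by norm_num, by norm_num,
      ?_, ?_, ?_⟩
    · intro i
      fin_cases i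
      · exact (ww_facts α β hab).1
      · exact (ww_facts α (-β) hab').1
    · ext x y
      simp only [Fin.sum_univ_two, Matrix.add_apply, Matrix.smul_apply, Matrix.of_apply, ww,
        smul_eq_mul, Matrix.cons_val_zero, Matrix.cons_val_one, map_add, map_mul,
        Complex.conj_ofReal]
      push_cast
      ring
    · simp only [Fin.sum_univ_two, Matrix.cons_val_zero, Matrix.cons_val_one]
      rw [(ww_facts α β hab).2, (ww_facts α (-β) hab').2, ← binEnt_symm (1/2 + α * β)]
      have e1 : 1 - (1 / 2 + α * β) = 1 / 2 - α * β := by ring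
      have e2 : 1 / 2 + α * -β = 1 / 2 - α * β := by ring
      rw [e1, e2]; ring
  · rintro e ⟨m, p, v, hp, hp1, hv, hρ, rfl⟩
    exact lower_bound α β hα hβ hab m p v hp hp1 hv hρ
end

section
/- Entanglement of formation of the two-party reduced W state: let ψ⁺ = (1/√2)(|01⟩ + |10⟩) in ℂ²⊗ℂ² (indexed by Fin 2 × Fin 2), let e₀₀ be the basis vector |00⟩, and let ρ = (1/3)·e₀₀ e₀₀† + (2/3)·ψ⁺(ψ⁺)†. Then the entanglement of formation of ρ equals H₂((1 − √5/3)/2). -/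
open scoped ComplexConjugate ComplexOrder

/-- `ψ⁺ = (1/√2)(|01⟩ + |10⟩)`. -/
noncomputable def psiPlus : Fin 2 × Fin 2 → ℂ :=
  fun x => if x = (0, 1) ∨ x = (1, 0) then ((1 / Real.sqrt 2 : ℝ) : ℂ) else 0

/-- The basis vector `|00⟩`. -/
def e00 : Fin 2 × Fin 2 → ℂ :=
  fun x => if x = (0, 0) then 1 else 0


noncomputable def sC (C : ℝ) : ℝ := Real.sqrt (1 - C ^ 2)
noncomputable def fC (C : ℝ) : ℝ := Real.binEntropy ((1 - sC C) / 2)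
noncomputable def phiS (s : ℝ) : ℝ := Real.sqrt (1 - s ^ 2) / s * (Real.log (1 + s) - Real.log (1 - s))

lemma log_ge_aux {s : ℝ} (h0 : 0 < s) (h1 : s < 1) : 2 * s ≤ Real.log (1 + s) - Real.log (1 - s) := by
  have h2 : 0 < 1 - s := by linarith
  have h := Real.le_log_one_add_of_nonneg (x := 2 * s / (1 - s)) (by positivity)
  have e1 : 1 + 2 * s / (1 - s) = (1 + s) / (1 - s) := by field_simp; ring
  have e2 : 2 * (2 * s / (1 - s)) / (2 * s / (1 - s) + 2) = 2 * s := by field_simp; ring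
  rw [e1, e2, Real.log_div (by linarith) (by linarith)] at h
  exact h

lemma phi_hasDeriv {s : ℝ} (h0 : 0 < s) (h1 : s < 1) :
    HasDerivAt phiS ((2 * s - (Real.log (1 + s) - Real.log (1 - s))) / (s ^ 2 * Real.sqrt (1 - s ^ 2))) s := by
  have h2 : 0 < 1 - s := by linarith
  have hp : 0 < 1 - s ^ 2 := by nlinarith
  have hq : 0 < Real.sqrt (1 - s ^ 2) := Real.sqrt_pos.2 hp
  have hsq : Real.sqrt (1 - s ^ 2) ^ 2 = 1 - s ^ 2 := Real.sq_sqrt hp.le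
  have d1 : HasDerivAt (fun s : ℝ => 1 - s ^ 2) (-(2 * s)) s := by
    simpa using (hasDerivAt_pow 2 s).const_sub 1
  have d2 := d1.sqrt hp.ne'
  have d3 := d2.div (hasDerivAt_id s) h0.ne'
  have d4 : HasDerivAt (fun s : ℝ => Real.log (1 + s)) (1 / (1 + s)) s :=
    ((hasDerivAt_id s).const_add 1).log (by simp; linarith)
  have d5 : HasDerivAt (fun s : ℝ => Real.log (1 - s)) (-1 / (1 - s)) s :=
    ((hasDerivAt_id s).const_sub 1).log (by simp; linarith)
  have d6 := d3.mul (d4.sub d5)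
  refine d6.congr_deriv ?_
  simp only [Pi.div_apply, Pi.sub_apply, id]
  set L := Real.log (1 + s) - Real.log (1 - s)
  set q := Real.sqrt (1 - s ^ 2)
  have e : 1 / (1 + s) - -1 / (1 - s) = 2 / q ^ 2 := by
    rw [hsq]
    have : 1 - s ^ 2 = (1 + s) * (1 - s) := by ring
    rw [this]; field_simp; ring
  rw [e]
  have e3 : -(2 * s) / (2 * q) * s - q * 1 = - 1 / q := by
    field_simp; rw [hsq]; ring
  rw [e3]
  field_simp
  ring

lemma phi_anti : AntitoneOn phiS (Set.Ioo 0 1) := by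
  refine antitoneOn_of_deriv_nonpos (convex_Ioo 0 1) ?_ ?_ ?_
  · intro x hx
    exact (phi_hasDeriv hx.1 hx.2).continuousAt.continuousWithinAt
  · intro x hx
    rw [interior_Ioo] at hx
    exact (phi_hasDeriv hx.1 hx.2).differentiableAt.differentiableWithinAt
  · intro x hx
    rw [interior_Ioo] at hx
    rw [(phi_hasDeriv hx.1 hx.2).deriv]
    apply div_nonpos_of_nonpos_of_nonneg
    · linarith [log_ge_aux hx.1 hx.2]
    · positivity

lemma sC_mem {C : ℝ} (h0 : 0 < C) (h1 : C < 1) : 0 < sC C ∧ sC C < 1 := by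
  constructor
  · exact Real.sqrt_pos.2 (by nlinarith)
  · rw [sC, Real.sqrt_lt' one_pos]; nlinarith

lemma fC_hasDeriv {C : ℝ} (h0 : 0 < C) (h1 : C < 1) :
    HasDerivAt fC (phiS (sC C) / 2) C := by
  obtain ⟨hs0, hs1⟩ := sC_mem h0 h1
  have hp : 0 < 1 - C ^ 2 := by nlinarith
  have d1 : HasDerivAt (fun s : ℝ => 1 - s ^ 2) (-(2 * C)) C := by
    simpa using (hasDerivAt_pow 2 C).const_sub 1
  have d2 : HasDerivAt sC _ C := d1.sqrt hp.ne'
  have d3 := (d2.const_sub 1).div_const 2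
  have d4 := Real.hasDerivAt_binEntropy (p := (1 - sC C) / 2) (by linarith) (by linarith)
  have d5 : HasDerivAt fC _ C := d4.comp C d3
  refine d5.congr_deriv ?_
  have e1 : 1 - (1 - sC C) / 2 = (1 + sC C) / 2 := by ring
  rw [e1, Real.log_div (by linarith) (by norm_num), Real.log_div (by linarith) (by norm_num)]
  have e2 : Real.sqrt (1 - sC C ^ 2) = C := by
    rw [sC, Real.sq_sqrt hp.le]; simp [h0.le]
  rw [phiS, e2]
  change _ * (-(-(2 * C) / (2 * sC C)) / 2) = _
  field_simp
  ring

lemma fC_convex : ConvexOn ℝ (Set.Icc 0 1) fC := by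
  refine MonotoneOn.convexOn_of_deriv (convex_Icc 0 1) ?_ ?_ ?_
  · apply Continuous.continuousOn
    unfold fC sC
    exact Real.binEntropy_continuous.comp (by fun_prop)
  · intro x hx
    rw [interior_Icc] at hx
    exact (fC_hasDeriv hx.1 hx.2).differentiableAt.differentiableWithinAt
  · rw [interior_Icc]
    intro x hx y hy hxy
    rw [(fC_hasDeriv hx.1 hx.2).deriv, (fC_hasDeriv hy.1 hy.2).deriv]
    have : sC y ≤ sC x := Real.sqrt_le_sqrt (by nlinarith [hx.1, hy.1])
    have := phi_anti (sC_mem hy.1 hy.2) (sC_mem hx.1 hx.2) this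
    linarith

lemma entE_eq_s16 (v : Fin 2 × Fin 2 → ℂ) (hn : ∑ x, ‖v x‖ ^ 2 = 1) (h11 : v (1, 1) = 0)
    (hs : v (0, 1) = v (1, 0)) : entE v = fC (2 * ‖v (1, 0)‖ ^ 2) / Real.log 2 := by
  unfold entE vnEntropy
  set M : Matrix (Fin 2) (Fin 2) ℂ := Matrix.of fun x x' => ∑ y, v (x, y) * conj (v (x', y)) with hM
  have hH : M.IsHermitian := by
    ext i j
    simp [hM, Matrix.conjTranspose_apply, mul_comm]
  rw [dif_pos hH]
  have hn' : ‖v (0, 0)‖ ^ 2 + 2 * ‖v (1, 0)‖ ^ 2 = 1 := by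
    rw [Fintype.sum_prod_type] at hn
    simp [Fin.sum_univ_two, h11, hs] at hn
    linarith
  have ht := hH.trace_eq_sum_eigenvalues
  have hd := hH.det_eq_prod_eigenvalues
  rw [Fin.sum_univ_two] at ht ⊢
  rw [Fin.prod_univ_two] at hd
  set l := hH.eigenvalues 0
  set m := hH.eigenvalues 1
  change M.trace = (l : ℂ) + (m : ℂ) at ht
  change M.det = (l : ℂ) * (m : ℂ) at hd
  have ht' : l + m = 1 := by
    have : (M.trace) = ((‖v (0, 0)‖ ^ 2 + 2 * ‖v (1, 0)‖ ^ 2 : ℝ) : ℂ) := by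
      simp [hM, Matrix.trace_fin_two, h11, hs, Complex.mul_conj']; ring
    rw [this, hn'] at ht
    exact_mod_cast ht.symm
  have hd' : l * m = ‖v (1, 0)‖ ^ 4 := by
    have : (M.det) = ((‖v (1, 0)‖ ^ 4 : ℝ) : ℂ) := by
      have hb := Complex.mul_conj' (v (1, 0))
      simp only [hM, Matrix.det_fin_two, Matrix.of_apply, Fin.sum_univ_two, h11, hs, map_zero]
      push_cast
      have : ((‖v (1, 0)‖ : ℝ) : ℂ) ^ 4 = (((‖v (1, 0)‖ : ℝ) : ℂ) ^ 2) ^ 2 := by ring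
      rw [this, ← hb]; ring
    rw [this] at hd
    exact_mod_cast hd.symm
  have hm : m = 1 - l := by linarith
  have e1 : -(l * Real.logb 2 l + m * Real.logb 2 m) = binEnt l := by
    rw [hm, binEnt]; ring
  rw [e1, binEnt_eq]
  congr 1
  have hsq : sC (2 * ‖v (1, 0)‖ ^ 2) = |1 - 2 * l| := by
    rw [sC, ← Real.sqrt_sq_eq_abs]
    congr 1
    rw [hm] at hd'
    linear_combination 4 * hd'
  rw [fC, hsq]
  rcases abs_choice (1 - 2 * l) with h | h
  · rw [h]; congr 1; ring
  · rw [h, ← Real.binEntropy_one_sub]; congr 1; ring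

lemma target_eq : binEnt ((1 - Real.sqrt 5 / 3) / 2) = fC (2 / 3) / Real.log 2 := by
  rw [binEnt_eq, fC, sC]
  have : (1 - (2 / 3 : ℝ) ^ 2) = 5 / 3 ^ 2 := by norm_num
  rw [this, Real.sqrt_div (by norm_num), Real.sqrt_sq (by norm_num)]

lemma inv_sqrt_two_sq : ((Real.sqrt 2 : ℝ) : ℂ)⁻¹ * ((Real.sqrt 2 : ℝ) : ℂ)⁻¹ = 1 / 2 := by
  have h : ((Real.sqrt 2 : ℝ) : ℂ) * ((Real.sqrt 2 : ℝ) : ℂ) = 2 := by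
    exact_mod_cast congrArg (fun x : ℝ => (x : ℂ)) (Real.mul_self_sqrt (show (0 : ℝ) ≤ 2 by norm_num))
  rw [← mul_inv, h]; norm_num

lemma sqrt_three_sq : ((Real.sqrt 3 : ℝ) : ℂ)⁻¹ * ((Real.sqrt 3 : ℝ) : ℂ)⁻¹ = 1 / 3 := by
  have h : ((Real.sqrt 3 : ℝ) : ℂ) * ((Real.sqrt 3 : ℝ) : ℂ) = 3 := by
    exact_mod_cast congrArg (fun x : ℝ => (x : ℂ)) (Real.mul_self_sqrt (show (0 : ℝ) ≤ 3 by norm_num))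
  rw [← mul_inv, h]; norm_num

noncomputable def wv (i : Fin 2) : Fin 2 × Fin 2 → ℂ := fun x =>
  if x = (0, 0) then ((Real.sqrt 3 : ℝ) : ℂ)⁻¹ else
  if x = (1, 1) then 0 else (if i = 0 then 1 else -1) * ((Real.sqrt 3 : ℝ) : ℂ)⁻¹

/-- the entanglement of formation of the two-party reduced W state
`ρ = (1/3)|00⟩⟨00| + (2/3)ψ⁺(ψ⁺)†` equals `H₂((1 − √5/3)/2)`. -/
theorem eof_reduced_W :
    EoF ((1/3 : ℂ) • Matrix.of (fun x y => e00 x * conj (e00 y))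
       + (2/3 : ℂ) • Matrix.of (fun x y => psiPlus x * conj (psiPlus y)))
      = binEnt ((1 - Real.sqrt 5 / 3) / 2) := by
  rw [target_eq]
  apply IsLeast.csInf_eq
  constructor
  · have hn : ∀ i, ∑ x, ‖wv i x‖ ^ 2 = 1 := by
      intro i
      rw [Fintype.sum_prod_type]
      fin_cases i <;> simp [Fin.sum_univ_two, wv] <;> norm_num
    refine ⟨2, fun _ => 1 / 2, wv, fun _ => by norm_num, by norm_num, hn, ?_, ?_⟩
    · ext ⟨a, b⟩ ⟨c, d⟩
      have h2 := inv_sqrt_two_sq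
      have h3 := sqrt_three_sq
      fin_cases a <;> fin_cases b <;> fin_cases c <;> fin_cases d <;>
        simp [Fin.sum_univ_two, wv, e00, psiPlus, h2, h3, Complex.conj_ofReal] <;> norm_num
    · have : ∀ i, entE (wv i) = fC (2 / 3) / Real.log 2 := by
        intro i
        rw [entE_eq_s16 _ (hn i) (by simp [wv]) (by simp [wv])]
        congr 2
        fin_cases i <;> simp [wv] <;> norm_num
      simp [this]
  · rintro e ⟨m, p, v, hp, hp1, hn, hρ, rfl⟩
    have key : ∀ x y, _ := fun x y => congrFun (congrFun hρ x) y
    simp only [Matrix.add_apply, Matrix.smul_apply, Matrix.sum_apply, Matrix.of_apply, smul_eq_mul] at key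
    have h2 := inv_sqrt_two_sq
    have k11 := key (1, 1) (1, 1)
    have ka := key (0, 1) (0, 1)
    have kb := key (0, 1) (1, 0)
    have kc := key (1, 0) (0, 1)
    have kd := key (1, 0) (1, 0)
    simp only [e00, psiPlus] at k11 ka kb kc kd
    norm_num [Complex.conj_ofReal, h2] at k11 ka kb kc kd
    have z11 : ∑ i, p i * ‖v i (1, 1)‖ ^ 2 = 0 := by
      have : ((∑ i, p i * ‖v i (1, 1)‖ ^ 2 : ℝ) : ℂ) = 0 := by
        push_cast; rw [k11]; simp [Complex.mul_conj']
      exact_mod_cast this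
    have zd : ∑ i, p i * ‖v i (1, 0)‖ ^ 2 = 1 / 3 := by
      have : ((∑ i, p i * ‖v i (1, 0)‖ ^ 2 : ℝ) : ℂ) = ((1 / 3 : ℝ) : ℂ) := by
        push_cast; simp only [Complex.mul_conj'] at kd; rw [← kd]
      exact_mod_cast this
    have zs : ∑ i, p i * ‖v i (0, 1) - v i (1, 0)‖ ^ 2 = 0 := by
      have : ((∑ i, p i * ‖v i (0, 1) - v i (1, 0)‖ ^ 2 : ℝ) : ℂ) = 0 := by
        push_cast
        have : ∀ i, (p i : ℂ) * (‖v i (0, 1) - v i (1, 0)‖ : ℂ) ^ 2 =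
          p i * (v i (0, 1) * conj (v i (0, 1))) - p i * (v i (0, 1) * conj (v i (1, 0)))
          - p i * (v i (1, 0) * conj (v i (0, 1))) + p i * (v i (1, 0) * conj (v i (1, 0))) := by
          intro i
          rw [← Complex.mul_conj', map_sub]; ring
        simp only [this, Finset.sum_add_distrib, Finset.sum_sub_distrib]
        rw [← ka, ← kb, ← kc, ← kd]; ring
      exact_mod_cast this
    have v11 : ∀ i, v i (1, 1) = 0 := by
      intro i
      have := (Finset.sum_eq_zero_iff_of_nonneg (fun i _ => mul_nonneg (hp i).le (sq_nonneg _))).1 z11 i (Finset.mem_univ i)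
      simpa [(hp i).ne'] using this
    have vs : ∀ i, v i (0, 1) = v i (1, 0) := by
      intro i
      have := (Finset.sum_eq_zero_iff_of_nonneg (fun i _ => mul_nonneg (hp i).le (sq_nonneg _))).1 zs i (Finset.mem_univ i)
      simpa [(hp i).ne', sub_eq_zero] using this
    have hE : ∑ i, p i * entE (v i) = (∑ i, p i * fC (2 * ‖v i (1, 0)‖ ^ 2)) / Real.log 2 := by
      rw [Finset.sum_div]
      refine Finset.sum_congr rfl fun i _ => ?_
      rw [entE_eq_s16 _ (hn i) (v11 i) (vs i)]; ring
    rw [hE]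
    have hJ := fC_convex.map_sum_le (t := Finset.univ) (w := p) (p := fun i => 2 * ‖v i (1, 0)‖ ^ 2)
      (fun i _ => (hp i).le) hp1 (by
        intro i _
        have := hn i
        rw [Fintype.sum_prod_type] at this
        simp [Fin.sum_univ_two, v11, vs] at this
        constructor
        · positivity
        · nlinarith [sq_nonneg ‖v i (0, 0)‖])
    simp only [smul_eq_mul] at hJ
    have hC : ∑ i, p i * (2 * ‖v i (1, 0)‖ ^ 2) = 2 / 3 := by
      rw [show (2 / 3 : ℝ) = 2 * (1 / 3) by norm_num, ← zd, Finset.mul_sum]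
      exact Finset.sum_congr rfl fun i _ => by ring
    rw [hC] at hJ
    exact div_le_div_of_nonneg_right hJ (Real.log_nonneg (by norm_num))
end

section
/- Density sampling (operator Chernoff bound for ensembles): let {(q_j, ρ_j)}_{j ∈ Fin m} be an ensemble of density matrices on ℂ^d with q_j > 0, average state ρ = ∑_j q_j ρ_j, and Holevo information χ = S(ρ) − ∑_j q_j S(ρ_j). Then for every ε, δ > 0 there exists n₀ such that for all n ≥ n₀ and all N ≥ 2^{n(χ+δ)}, the following holds: if X_1,…,X_N are independent random matrices, each equal to the tensor-product matrix ρ_J (with entries (ρ_J)_{K,L} = ∏_{t=1}^n (ρ_{J_t})_{K_t L_t} on the (Fin d)^n-indexed space) with probability q_J = ∏_{t=1}^n q_{J_t} for J ∈ (Fin m)^n, then with probability at least 1 − ε one has ‖(1/N)·∑_{k=1}^N X_k − ρ^{⊗n}‖₁ ≤ ε, where ρ^{⊗n} has entries (ρ^{⊗n})_{K,L} = ∏_{t=1}^n ρ_{K_t L_t}. -/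
open scoped ComplexConjugate ComplexOrder

/-- The tensor-product matrix `ρ_{J_1} ⊗ ⋯ ⊗ ρ_{J_n}` associated to a sequence
`J ∈ (Fin m)^n`, with entries `(ρ_J)_{K,L} = ∏_t (ρ_{J_t})_{K_t L_t}`. -/
noncomputable def tensorWord {m d n : ℕ} (ρs : Fin m → Matrix (Fin d) (Fin d) ℂ)
    (J : Fin n → Fin m) : Matrix (Fin n → Fin d) (Fin n → Fin d) ℂ :=
  Matrix.of fun K L => ∏ t, ρs (J t) (K t) (L t)

/-- The `n`-fold tensor power `ρ^{⊗n}` of a single matrix. -/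
noncomputable def tensorPow {d : ℕ} (ρ : Matrix (Fin d) (Fin d) ℂ) (n : ℕ) :
    Matrix (Fin n → Fin d) (Fin n → Fin d) ℂ :=
  Matrix.of fun K L => ∏ t, ρ (K t) (L t)


theorem ds_prob {α : Type*} [Fintype α] (p : α → ℝ) (hp : ∑ a, p a = 1) (N : ℕ) :
    ∑ f : Fin N → α, ∏ k, p (f k) = 1 := by
  classical
  have := Finset.prod_univ_sum (fun _ : Fin N => (Finset.univ : Finset α)) (fun _ a => p a)
  rw [Fintype.piFinset_univ] at this
  rw [← this]; simp [hp]

theorem ds_cons {α : Type*} [Fintype α] (N : ℕ) (F : (Fin (N+1) → α) → ℝ) :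
    ∑ f, F f = ∑ a, ∑ f : Fin N → α, F (Fin.cons a f) := by
  rw [← Fintype.sum_prod_type']
  exact (Fintype.sum_equiv (Fin.consEquiv (fun _ => α)) _ _ (fun x => rfl)).symm

theorem ds_mean {α : Type*} [Fintype α] (p : α → ℝ) (hp : ∑ a, p a = 1) (N : ℕ) (g : α → ℝ) :
    ∑ f : Fin N → α, (∏ k, p (f k)) * ∑ k, g (f k) = N * ∑ a, p a * g a := by
  induction N with
  | zero => simp
  | succ N ih =>
    rw [ds_cons]
    simp only [Fin.prod_univ_succ, Fin.sum_univ_succ, Fin.cons_zero, Fin.cons_succ]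
    have : ∀ a, ∑ f : Fin N → α, (p a * ∏ k, p (f k)) * (g a + ∑ k, g (f k)) =
        p a * g a + p a * (N * ∑ a, p a * g a) := by
      intro a
      rw [← ih]
      calc _ = ∑ f : Fin N → α, ((p a * g a) * (∏ k, p (f k)) +
            p a * ((∏ k, p (f k)) * ∑ k, g (f k))) :=
              Finset.sum_congr rfl (fun f _ => by ring)
        _ = _ := by
          rw [Finset.sum_add_distrib, ← Finset.mul_sum, ds_prob p hp, ← Finset.mul_sum, mul_one]
    simp only [this]
    rw [Finset.sum_add_distrib, ← Finset.sum_mul, hp]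
    push_cast; ring

theorem ds_var {α : Type*} [Fintype α] (p : α → ℝ) (hp : ∑ a, p a = 1) (N : ℕ) (h : α → ℂ)
    (h0 : ∑ a, (p a : ℂ) * h a = 0) :
    ∑ f : Fin N → α, (∏ k, p (f k)) * ‖∑ k, h (f k)‖ ^ 2 = N * ∑ a, p a * ‖h a‖ ^ 2 := by
  simp only [← Complex.normSq_eq_norm_sq]
  induction N with
  | zero => simp
  | succ N ih =>
    rw [ds_cons]
    simp only [Fin.prod_univ_succ, Fin.sum_univ_succ, Fin.cons_zero, Fin.cons_succ,
      Complex.normSq_add]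
    rw [Finset.sum_comm]
    have : ∀ f : Fin N → α, ∑ a, (p a * ∏ k, p (f k)) * (Complex.normSq (h a) +
        Complex.normSq (∑ k, h (f k)) + 2 * (h a * conj (∑ k, h (f k))).re) =
        (∏ k, p (f k)) * (∑ a, p a * Complex.normSq (h a)) +
          (∏ k, p (f k)) * Complex.normSq (∑ k, h (f k)) := by
      intro f
      have hz : ∑ a, p a * (h a * conj (∑ k, h (f k))).re = 0 := by
        have : ∑ a, p a * (h a * conj (∑ k, h (f k))).re =
            ((∑ a, (p a : ℂ) * h a) * conj (∑ k, h (f k))).re := by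
          rw [Finset.sum_mul, Complex.re_sum]
          refine Finset.sum_congr rfl (fun a _ => ?_)
          rw [mul_assoc, Complex.re_ofReal_mul]
        rw [this, h0]; simp
      generalize conj (∑ k, h (f k)) = z at *
      calc _ = ∑ a, ((∏ k, p (f k)) * (p a * Complex.normSq (h a)) +
            p a * ((∏ k, p (f k)) * Complex.normSq (∑ k, h (f k))) +
            2 * (∏ k, p (f k)) * (p a * (h a * z).re)) :=
              Finset.sum_congr rfl (fun f _ => by ring)
        _ = _ := by
          rw [Finset.sum_add_distrib, Finset.sum_add_distrib, ← Finset.mul_sum, ← Finset.mul_sum,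
            hz, ← Finset.sum_mul, hp]
          ring
    simp only [this]
    rw [Finset.sum_add_distrib, ih, ← Finset.sum_mul, ds_prob p hp]
    push_cast; ring

/-- Chebyshev. -/
theorem ds_cheb {α : Type*} [Fintype α] (p : α → ℝ) (hp0 : ∀ a, 0 ≤ p a) (hp : ∑ a, p a = 1)
    (g : α → ℝ) (μ : ℝ) (hμ : μ = ∑ a, p a * g a) (η κ : ℝ) (hη : 0 < η) (hκ : 0 < κ) :
    ∃ n₀ : ℕ, ∀ n, n₀ ≤ n → ∀ w : (Fin n → α) → ℝ, (∀ a, 0 ≤ w a) → 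
      (∀ a, w a ≤ ∏ t, p (a t)) → (∀ a, w a ≠ 0 → n * η ≤ |∑ t, g (a t) - n * μ|) →
      ∑ a, w a ≤ κ := by
  set V := ∑ a, p a * ‖((g a - μ : ℝ) : ℂ)‖ ^ 2 with hV
  obtain ⟨n₀, hn₀⟩ := exists_nat_ge (V / (η ^ 2 * κ))
  refine ⟨n₀ + 1, fun n hn w hw0 hw hwt => ?_⟩
  have hn1 : (n₀ : ℝ) + 1 ≤ n := by exact_mod_cast hn
  have hn0 : (0:ℝ) < n := by have := Nat.cast_nonneg (α := ℝ) n₀; linarith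
  have hvar := ds_var p hp n (fun a => ((g a - μ : ℝ) : ℂ)) (by
    have : ∑ a, p a * (g a - μ) = 0 := by
      simp only [mul_sub, Finset.sum_sub_distrib, ← hμ, ← Finset.sum_mul, hp]; ring
    exact_mod_cast this)
  rw [← hV] at hvar
  have key : ∑ a, w a * (n * η) ^ 2 ≤ n * V := by
    rw [← hvar]
    refine Finset.sum_le_sum (fun a _ => ?_)
    have he : ‖∑ k, ((g (a k) - μ : ℝ) : ℂ)‖ = |∑ t, g (a t) - n * μ| := by
      rw [← Complex.ofReal_sum, Complex.norm_real, Real.norm_eq_abs]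
      congr 1; simp
    rw [he]
    by_cases h : w a = 0
    · rw [h, zero_mul]; exact mul_nonneg (Finset.prod_nonneg fun t _ => hp0 _) (sq_nonneg _)
    · exact mul_le_mul (hw a) (pow_le_pow_left₀ (by positivity) (hwt a h) 2) (by positivity)
        (Finset.prod_nonneg fun t _ => hp0 _)
  rw [← Finset.sum_mul] at key
  have h1 : (∑ a, w a) * (n * η ^ 2) ≤ V := by
    have : n * ((∑ a, w a) * (n * η ^ 2)) ≤ n * V := by linarith [key, mul_pow (n:ℝ) η 2]
    exact le_of_mul_le_mul_left this hn0
  rw [div_le_iff₀ (by positivity)] at hn₀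
  have h2 : V ≤ κ * (n * η ^ 2) := by
    have : (n₀ : ℝ) * (η ^ 2 * κ) ≤ n * (η ^ 2 * κ) := by gcongr; linarith
    linarith
  exact le_of_mul_le_mul_right (h1.trans h2) (by positivity)

open Matrix in
theorem ds_spec {ι : Type*} [Fintype ι] [DecidableEq ι] {A : Matrix ι ι ℂ} (hA : A.IsHermitian) :
    ∃ V : Matrix ι ι ℂ, V * Vᴴ = 1 ∧ Vᴴ * V = 1 ∧
      A = V * diagonal (fun i => (hA.eigenvalues i : ℂ)) * Vᴴ := by
  refine ⟨hA.eigenvectorUnitary, ?_, ?_, ?_⟩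
  · rw [← star_eq_conjTranspose]; exact Unitary.coe_mul_star_self _
  · rw [← star_eq_conjTranspose]; exact Unitary.coe_star_mul_self _
  · exact hA.spectral_theorem

/-- Squared Hilbert-Schmidt norm. -/
noncomputable def dsHS {ι : Type*} [Fintype ι] (A : Matrix ι ι ℂ) : ℝ := ∑ i, ∑ j, ‖A i j‖ ^ 2

theorem dsHS_nonneg {ι : Type*} [Fintype ι] (A : Matrix ι ι ℂ) : 0 ≤ dsHS A :=
  Finset.sum_nonneg fun _ _ => Finset.sum_nonneg fun _ _ => by positivity

open Matrix in
theorem dsHS_eq {ι : Type*} [Fintype ι] (A : Matrix ι ι ℂ) : dsHS A = (Aᴴ * A).trace.re := by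
  rw [dsHS, Finset.sum_comm, Matrix.trace, Complex.re_sum]
  refine Finset.sum_congr rfl fun i _ => ?_
  rw [Matrix.diag_apply, Matrix.mul_apply, Complex.re_sum]
  refine Finset.sum_congr rfl fun j _ => ?_
  rw [Matrix.conjTranspose_apply, ← Complex.normSq_eq_norm_sq, Complex.star_def,
    ← Complex.normSq_eq_conj_mul_self, Complex.ofReal_re]

open Matrix in
theorem dsHS_eq' {ι : Type*} [Fintype ι] (A : Matrix ι ι ℂ) : dsHS A = (A * Aᴴ).trace.re := by
  rw [dsHS_eq, Matrix.trace_mul_comm]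

theorem ds_cs {ι : Type*} [Fintype ι] (A B : Matrix ι ι ℂ) :
    ‖(A * B).trace‖ ≤ √(dsHS A) * √(dsHS B) := by
  have h1 : ‖(A * B).trace‖ ≤ ∑ x : ι × ι, ‖A x.1 x.2‖ * ‖B x.2 x.1‖ := by
    rw [Fintype.sum_prod_type, Matrix.trace]
    refine (norm_sum_le _ _).trans (Finset.sum_le_sum fun i _ => ?_)
    rw [Matrix.diag_apply, Matrix.mul_apply]
    refine (norm_sum_le _ _).trans (Finset.sum_le_sum fun j _ => ?_)
    rw [norm_mul]
  refine h1.trans ((Real.sum_mul_le_sqrt_mul_sqrt _ _ _).trans (le_of_eq ?_))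
  rw [Fintype.sum_prod_type, Fintype.sum_prod_type]
  congr 2
  exact Finset.sum_comm

open Matrix in
open scoped MatrixOrder Matrix.Norms.L2Operator in
theorem ds_fact {ι : Type*} [Fintype ι] [DecidableEq ι] {A : Matrix ι ι ℂ} (hA : A.PosSemidef) :
    ∃ B : Matrix ι ι ℂ, A = B * Bᴴ := by
  obtain ⟨B, hB⟩ := CStarAlgebra.nonneg_iff_eq_star_mul_self.mp hA.nonneg
  exact ⟨Bᴴ, by rw [conjTranspose_conjTranspose]; exact hB⟩

open Matrix in
theorem ds_proj {ι : Type*} [Fintype ι] [DecidableEq ι] (U Q A : Matrix ι ι ℂ) (hU : Uᴴ * U = 1)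
    (hQ : Qᴴ = Q) (hQ2 : Q * Q = Q) (hA : A.PosSemidef) :
    0 ≤ (Q * A).trace.re ∧ ‖(U * Q * A).trace‖ ≤ √((Q * A).trace.re) * √(A.trace.re) := by
  obtain ⟨B, rfl⟩ : ∃ B : Matrix ι ι ℂ, A = B * Bᴴ := by
    exact ds_fact hA
  have h1 : dsHS (U * Q * B) = (Q * (B * Bᴴ)).trace.re := by
    rw [dsHS_eq]
    simp only [conjTranspose_mul, hQ]
    have : Bᴴ * (Q * Uᴴ) * (U * Q * B) = Bᴴ * (Q * B) := by
      calc _ = Bᴴ * Q * (Uᴴ * U) * Q * B := by simp only [Matrix.mul_assoc]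
        _ = Bᴴ * (Q * Q) * B := by rw [hU]; simp only [Matrix.mul_assoc, Matrix.one_mul]
        _ = _ := by rw [hQ2]; simp only [Matrix.mul_assoc]
    rw [this, Matrix.trace_mul_comm, Matrix.mul_assoc]
  have h2 : dsHS Bᴴ = (B * Bᴴ).trace.re := by
    rw [dsHS_eq]; simp
  refine ⟨h1 ▸ dsHS_nonneg _, ?_⟩
  rw [← h1, ← h2, ← Matrix.mul_assoc]
  exact ds_cs _ _

open Matrix in
theorem ds_proj' {ι : Type*} [Fintype ι] [DecidableEq ι] (U Q A : Matrix ι ι ℂ) (hU : Uᴴ * U = 1)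
    (hQ : Qᴴ = Q) (hQ2 : Q * Q = Q) (hA : A.PosSemidef) :
    ‖(U * Q * A).trace‖ ≤ A.trace.re := by
  obtain ⟨h1, h2⟩ := ds_proj U Q A hU hQ hQ2 hA
  obtain ⟨h3, -⟩ := ds_proj U (1 - Q) A hU (by simp [hQ])
    (by simp [Matrix.mul_sub, Matrix.sub_mul, hQ2]) hA
  have h4 : (Q * A).trace.re ≤ A.trace.re := by
    rw [Matrix.sub_mul, Matrix.trace_sub, Matrix.one_mul, Complex.sub_re] at h3
    linarith
  refine h2.trans ?_
  calc _ ≤ √(A.trace.re) * √(A.trace.re) := by gcongr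
    _ = _ := Real.mul_self_sqrt (h1.trans h4)

open Matrix in
theorem ds_traceNorm {ι : Type*} [Fintype ι] [DecidableEq ι] (M : Matrix ι ι ℂ) :
    ∃ U : Matrix ι ι ℂ, Uᴴ * U = 1 ∧ traceNorm M ≤ ‖(U * M).trace‖ := by
  unfold traceNorm
  split_ifs with h
  · obtain ⟨V, hV1, hV2, hM⟩ := ds_spec h
    set s : ι → ℂ := fun i => if 0 ≤ h.eigenvalues i then 1 else -1 with hs
    refine ⟨V * diagonal s * Vᴴ, ?_, ?_⟩
    · simp only [conjTranspose_mul, conjTranspose_conjTranspose, diagonal_conjTranspose]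
      calc _ = V * diagonal (star s) * (Vᴴ * V) * diagonal s * Vᴴ := by
            simp only [Matrix.mul_assoc]
        _ = V * (diagonal (star s) * diagonal s) * Vᴴ := by
            rw [hV2]; simp only [Matrix.mul_assoc, Matrix.one_mul]
        _ = V * 1 * Vᴴ := by
            rw [diagonal_mul_diagonal, ← diagonal_one]
            congr 3
            ext i
            simp only [hs, Pi.star_apply]
            split_ifs <;> simp
        _ = 1 := by rw [Matrix.mul_one, hV1]
    · have : ((V * diagonal s * Vᴴ) * M).trace = ((∑ i, |h.eigenvalues i| : ℝ) : ℂ) := by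
        calc _ = ((V * diagonal s * Vᴴ) *
              (V * diagonal (fun i => (h.eigenvalues i : ℂ)) * Vᴴ)).trace := by rw [← hM]
          _ = (V * (diagonal s * (Vᴴ * V) * diagonal (fun i => (h.eigenvalues i : ℂ)) * Vᴴ)).trace := by
            simp only [Matrix.mul_assoc]
          _ = _ := by
            rw [hV2, Matrix.trace_mul_comm, Matrix.mul_one, Matrix.mul_assoc, hV2, Matrix.mul_one,
              diagonal_mul_diagonal, trace_diagonal, Complex.ofReal_sum]
            refine Finset.sum_congr rfl fun i _ => ?_
            simp only [hs]
            split_ifs with h0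
            · rw [abs_of_nonneg h0, one_mul]
            · rw [abs_of_neg (not_le.1 h0)]; simp
      rw [this, Complex.norm_real]
      exact le_abs_self _
  · exact ⟨1, by simp, norm_nonneg _⟩

/-- deterministic bound -/
theorem ds_det {ι : Type*} [Fintype ι] [DecidableEq ι] (A Abar S Sbar T Tbar P : Matrix ι ι ℂ)
    (hA : A = S + T) (hAb : Abar = Sbar + Tbar) (hAp : A.PosSemidef) (hAbp : Abar.PosSemidef)
    (hT : T.PosSemidef) (hTb : Tbar.PosSemidef) (hP : P.conjTranspose = P) (hP2 : P * P = P)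
    (hA1 : A.trace.re = 1) (hAb1 : Abar.trace.re = 1) :
    traceNorm (A - Abar) ≤ √P.trace.re * √(dsHS (S - Sbar)) + T.trace.re + Tbar.trace.re
      + √(((1 - P) * A).trace.re) + √(((1 - P) * Abar).trace.re) := by
  obtain ⟨U, hU, hUM⟩ := ds_traceNorm (A - Abar)
  have hQ : (1 - P).conjTranspose = 1 - P := by simp [hP]
  have hQ2 : (1 - P) * (1 - P) = 1 - P := by simp [Matrix.mul_sub, Matrix.sub_mul, hP2]
  have e : U * (A - Abar) = U * P * (S - Sbar) + U * P * T - U * P * Tbar + U * (1 - P) * A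
      - U * (1 - P) * Abar := by
    subst hA hAb; noncomm_ring
  have h1 : ‖(U * P * (S - Sbar)).trace‖ ≤ √P.trace.re * √(dsHS (S - Sbar)) := by
    refine (ds_cs _ _).trans (le_of_eq ?_)
    congr 2
    rw [dsHS_eq, Matrix.conjTranspose_mul, Matrix.mul_assoc, ← Matrix.mul_assoc _ U, hU, hP,
      Matrix.one_mul, hP2]
  have h2 := ds_proj' U P T hU hP hP2 hT
  have h3 := ds_proj' U P Tbar hU hP hP2 hTb
  have h4 := (ds_proj U (1 - P) A hU hQ hQ2 hAp).2
  have h5 := (ds_proj U (1 - P) Abar hU hQ hQ2 hAbp).2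
  rw [hA1, Real.sqrt_one, mul_one] at h4
  rw [hAb1, Real.sqrt_one, mul_one] at h5
  refine hUM.trans ?_
  rw [e, Matrix.trace_sub, Matrix.trace_add, Matrix.trace_sub, Matrix.trace_add]
  refine (norm_sub_le _ _).trans ?_
  refine (add_le_add_left (norm_add_le _ _) _).trans ?_
  refine (add_le_add_left (add_le_add_left (norm_sub_le _ _) _) _).trans ?_
  refine (add_le_add_left (add_le_add_left (add_le_add_left (norm_add_le _ _) _) _) _).trans ?_
  linarith

theorem ds_jensen {β : Type*} [Fintype β] (w X : β → ℝ) (hw : ∀ b, 0 ≤ w b) (hw1 : ∑ b, w b = 1)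
    (hX : ∀ b, 0 ≤ X b) : ∑ b, w b * √(X b) ≤ √(∑ b, w b * X b) := by
  have h := Real.sum_sqrt_mul_sqrt_le (f := w) (g := fun b => w b * X b) Finset.univ hw
    (fun b => mul_nonneg (hw b) (hX b))
  rw [hw1, Real.sqrt_one, one_mul] at h
  refine le_trans (le_of_eq (Finset.sum_congr rfl fun b _ => ?_)) h
  rw [Real.sqrt_mul (hw b), ← mul_assoc, Real.mul_self_sqrt (hw b)]

theorem ds_var_le {α : Type*} [Fintype α] (p : α → ℝ) (hp : ∑ a, p a = 1) (z : α → ℂ) :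
    ∑ a, p a * ‖z a - ∑ b, (p b : ℂ) * z b‖ ^ 2 ≤ ∑ a, p a * ‖z a‖ ^ 2 := by
  simp only [← Complex.normSq_eq_norm_sq, Complex.normSq_sub]
  set m := ∑ b, (p b : ℂ) * z b with hm
  have h1 : ∑ a, p a * (z a * conj m).re = Complex.normSq m := by
    have : ∑ a, p a * (z a * conj m).re = (m * conj m).re := by
      conv_rhs => rw [hm, Finset.sum_mul, Complex.re_sum]
      refine Finset.sum_congr rfl (fun a _ => ?_)
      rw [mul_assoc, Complex.re_ofReal_mul]
    rw [this, Complex.mul_conj, Complex.ofReal_re]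
  have h2 : ∑ a, p a * (Complex.normSq (z a) + Complex.normSq m - 2 * (z a * conj m).re) =
      ∑ a, p a * Complex.normSq (z a) + Complex.normSq m - 2 * Complex.normSq m := by
    calc _ = ∑ a, (p a * Complex.normSq (z a) + p a * Complex.normSq m
            - 2 * (p a * (z a * conj m).re)) := Finset.sum_congr rfl fun a _ => by ring
      _ = _ := by
        rw [Finset.sum_sub_distrib, Finset.sum_add_distrib, ← Finset.sum_mul, hp,
          ← Finset.mul_sum, h1, one_mul]
  rw [h2]
  linarith [Complex.normSq_nonneg m]

theorem ds_hs {α ι : Type*} [Fintype α] [Fintype ι] (p : α → ℝ) (hp0 : ∀ a, 0 ≤ p a)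
    (hp : ∑ a, p a = 1) (S : α → Matrix ι ι ℂ) (c : ℝ) (hc : ∀ a, dsHS (S a) ≤ c) (N : ℕ)
    (hN : 0 < N) :
    ∑ f : Fin N → α, (∏ k, p (f k)) * dsHS ((N : ℂ)⁻¹ • ∑ k, S (f k) - ∑ a, (p a : ℂ) • S a)
      ≤ c / N := by
  have hN' : (0:ℝ) < N := by exact_mod_cast hN
  have hNc : (N : ℂ) ≠ 0 := by exact_mod_cast hN.ne'
  have e : ∀ i j, ∑ f : Fin N → α, (∏ k, p (f k)) *
      ‖((N : ℂ)⁻¹ • ∑ k, S (f k) - ∑ a, (p a : ℂ) • S a) i j‖ ^ 2 ≤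
      (N : ℝ)⁻¹ * ∑ a, p a * ‖S a i j‖ ^ 2 := by
    intro i j
    set m := ∑ b, (p b : ℂ) * S b i j with hm
    have h1 := ds_var p hp N (fun a => S a i j - m) (by
      simp only [mul_sub, Finset.sum_sub_distrib, ← hm, ← Finset.sum_mul]
      rw [← Complex.ofReal_sum, hp]; simp)
    have h2 : ∀ f : Fin N → α, ‖((N : ℂ)⁻¹ • ∑ k, S (f k) - ∑ a, (p a : ℂ) • S a) i j‖ ^ 2 =
        ((N:ℝ)⁻¹) ^ 2 * ‖∑ k, (S (f k) i j - m)‖ ^ 2 := by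
      intro f
      rw [← mul_pow]
      congr 1
      have : ((N : ℂ)⁻¹ • ∑ k, S (f k) - ∑ a, (p a : ℂ) • S a) i j =
          ((N : ℂ)⁻¹) * ∑ k, (S (f k) i j - m) := by
        rw [Finset.sum_sub_distrib]
        simp only [Matrix.sub_apply, Matrix.smul_apply, Matrix.sum_apply, smul_eq_mul, ← hm,
          Finset.sum_const, Finset.card_univ, Fintype.card_fin, nsmul_eq_mul]
        field_simp
      rw [this, norm_mul, norm_inv, Complex.norm_natCast]
    calc _ = ((N:ℝ)⁻¹) ^ 2 * ∑ f : Fin N → α, (∏ k, p (f k)) * ‖∑ k, (S (f k) i j - m)‖ ^ 2 := by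
          rw [Finset.mul_sum]
          refine Finset.sum_congr rfl fun f _ => ?_
          rw [h2]; ring
      _ = (N : ℝ)⁻¹ * ∑ a, p a * ‖S a i j - m‖ ^ 2 := by
          rw [h1]; field_simp
      _ ≤ _ := by
          gcongr ?_ * ?_
          exact ds_var_le p hp _
  calc _ = ∑ i, ∑ j, ∑ f : Fin N → α, (∏ k, p (f k)) *
      ‖((N : ℂ)⁻¹ • ∑ k, S (f k) - ∑ a, (p a : ℂ) • S a) i j‖ ^ 2 := by
        simp only [dsHS, Finset.mul_sum]
        rw [Finset.sum_comm]
        refine Finset.sum_congr rfl fun i _ => ?_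
        rw [Finset.sum_comm]
    _ ≤ ∑ i, ∑ j, (N : ℝ)⁻¹ * ∑ a, p a * ‖S a i j‖ ^ 2 :=
        Finset.sum_le_sum fun i _ => Finset.sum_le_sum fun j _ => e i j
    _ = (N : ℝ)⁻¹ * ∑ a, p a * dsHS (S a) := by
        simp only [dsHS, Finset.mul_sum]
        symm
        rw [Finset.sum_comm]
        refine Finset.sum_congr rfl fun i _ => ?_
        rw [Finset.sum_comm]
    _ ≤ (N : ℝ)⁻¹ * ∑ a, p a * c := by
        gcongr with a
        · exact hp0 a
        · exact hc a
    _ = c / N := by rw [← Finset.sum_mul, hp]; field_simp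

theorem ds_psd_avg {α ι : Type*} [Fintype α] [Fintype ι] (w : α → ℝ) (hw : ∀ a, 0 ≤ w a)
    (R : α → Matrix ι ι ℂ) (hR : ∀ a, (R a).PosSemidef) :
    (∑ a, (w a : ℂ) • R a).PosSemidef :=
  Matrix.posSemidef_sum _ fun a _ => (hR a).smul (by exact_mod_cast hw a)

theorem ds_tr_avg {α ι : Type*} [Fintype α] [Fintype ι] (w : α → ℝ)
    (R : α → Matrix ι ι ℂ) (Q : Matrix ι ι ℂ) :
    (Q * ∑ a, (w a : ℂ) • R a).trace.re = ∑ a, w a * (Q * R a).trace.re := by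
  rw [Matrix.mul_sum, Matrix.trace_sum, Complex.re_sum]
  refine Finset.sum_congr rfl fun a _ => ?_
  rw [Matrix.mul_smul, Matrix.trace_smul, smul_eq_mul, Complex.re_ofReal_mul]

theorem ds_avg {α ι : Type*} [Fintype α] [Fintype ι] [DecidableEq ι] (p : α → ℝ)
    (hp0 : ∀ a, 0 ≤ p a) (hp : ∑ a, p a = 1) (R S T : α → Matrix ι ι ℂ) (P : Matrix ι ι ℂ)
    (hRST : ∀ a, R a = S a + T a) (hR : ∀ a, (R a).PosSemidef) (hT : ∀ a, (T a).PosSemidef)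
    (hR1 : ∀ a, (R a).trace.re = 1) (hP : P.conjTranspose = P) (hP2 : P * P = P)
    (c : ℝ) (hc : ∀ a, dsHS (S a) ≤ c) (N : ℕ) (hN : 0 < N)
    (T0 G : ℝ) (hT0 : ∑ a, p a * (T a).trace.re = T0)
    (hG : ((1 - P) * ∑ a, (p a : ℂ) • R a).trace.re = G) :
    ∑ f : Fin N → α, (∏ k, p (f k)) *
      traceNorm ((N : ℂ)⁻¹ • ∑ k, R (f k) - ∑ a, (p a : ℂ) • R a) ≤
      √P.trace.re * √(c / N) + 2 * T0 + 2 * √G := by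
  have hN' : (0:ℝ) < N := by exact_mod_cast hN
  have hNc : (N : ℂ) ≠ 0 := by exact_mod_cast hN.ne'
  have hw0 : ∀ f : Fin N → α, 0 ≤ ∏ k, p (f k) := fun f => Finset.prod_nonneg fun _ _ => hp0 _
  have hw1 := ds_prob p hp N
  have hQ : (1 - P).conjTranspose = 1 - P := by simp [hP]
  have hQ2 : (1 - P) * (1 - P) = 1 - P := by simp [Matrix.mul_sub, Matrix.sub_mul, hP2]
  have conv : ∀ (A : α → Matrix ι ι ℂ) (f : Fin N → α), (N : ℂ)⁻¹ • ∑ k, A (f k) =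
      ∑ k, (((N:ℝ)⁻¹ : ℝ) : ℂ) • A (f k) := by
    intro A f
    rw [Finset.smul_sum]; push_cast; rfl
  have htr : ∀ (Q : Matrix ι ι ℂ) (A : α → Matrix ι ι ℂ) (f : Fin N → α),
      (Q * ((N : ℂ)⁻¹ • ∑ k, A (f k))).trace.re = (N:ℝ)⁻¹ * ∑ k, (Q * A (f k)).trace.re := by
    intro Q A f
    rw [conv, ds_tr_avg (fun _ : Fin N => (N:ℝ)⁻¹) (fun k => A (f k)), Finset.mul_sum]
  have hpsd : ∀ (A : α → Matrix ι ι ℂ) (_ : ∀ a, (A a).PosSemidef) (f : Fin N → α),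
      ((N : ℂ)⁻¹ • ∑ k, A (f k)).PosSemidef := by
    intro A hA f
    rw [conv]
    exact ds_psd_avg (fun _ : Fin N => (N:ℝ)⁻¹) (fun _ => by positivity) _ fun k => hA _
  have hEtr : ∀ (Q : Matrix ι ι ℂ) (A : α → Matrix ι ι ℂ),
      ∑ f : Fin N → α, (∏ k, p (f k)) * (Q * ((N : ℂ)⁻¹ • ∑ k, A (f k))).trace.re =
        ∑ a, p a * (Q * A a).trace.re := by
    intro Q A
    have := ds_mean p hp N (fun a => (Q * A a).trace.re)
    calc _ = (N:ℝ)⁻¹ * ∑ f : Fin N → α, (∏ k, p (f k)) * ∑ k, (Q * A (f k)).trace.re := by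
          rw [Finset.mul_sum]
          refine Finset.sum_congr rfl fun f _ => ?_
          rw [htr]; ring
      _ = _ := by rw [this]; field_simp
  have hdet : ∀ f : Fin N → α, traceNorm ((N : ℂ)⁻¹ • ∑ k, R (f k) - ∑ a, (p a : ℂ) • R a) ≤
      √P.trace.re * √(dsHS ((N : ℂ)⁻¹ • ∑ k, S (f k) - ∑ a, (p a : ℂ) • S a)) +
      (1 * ((N : ℂ)⁻¹ • ∑ k, T (f k))).trace.re + T0 +
      √(((1 - P) * ((N : ℂ)⁻¹ • ∑ k, R (f k))).trace.re) + √G := by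
    intro f
    have := ds_det ((N : ℂ)⁻¹ • ∑ k, R (f k)) (∑ a, (p a : ℂ) • R a)
      ((N : ℂ)⁻¹ • ∑ k, S (f k)) (∑ a, (p a : ℂ) • S a)
      ((N : ℂ)⁻¹ • ∑ k, T (f k)) (∑ a, (p a : ℂ) • T a) P
      (by simp only [hRST, Finset.sum_add_distrib, smul_add])
      (by simp only [hRST, Finset.sum_add_distrib, smul_add])
      (hpsd R hR f) (ds_psd_avg p hp0 R hR) (hpsd T hT f) (ds_psd_avg p hp0 T hT) hP hP2
      (by
        have := htr 1 R f
        simp only [Matrix.one_mul, hR1] at this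
        rw [this]; simp; field_simp)
      (by
        have := ds_tr_avg p R 1
        simp only [Matrix.one_mul, hR1] at this
        rw [this]; simp [hp])
    have h2 : (∑ a, (p a : ℂ) • T a).trace.re = T0 := by
      have := ds_tr_avg p T 1
      simp only [Matrix.one_mul] at this
      rw [this, hT0]
    rw [h2, hG] at this
    rw [Matrix.one_mul]
    exact this
  calc _ ≤ ∑ f : Fin N → α, (∏ k, p (f k)) * (√P.trace.re * √(dsHS ((N : ℂ)⁻¹ • ∑ k, S (f k) - ∑ a, (p a : ℂ) • S a)) +
      (1 * ((N : ℂ)⁻¹ • ∑ k, T (f k))).trace.re + T0 +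
      √(((1 - P) * ((N : ℂ)⁻¹ • ∑ k, R (f k))).trace.re) + √G) :=
        Finset.sum_le_sum fun f _ => mul_le_mul_of_nonneg_left (hdet f) (hw0 f)
    _ = √P.trace.re * ∑ f : Fin N → α, (∏ k, p (f k)) *
          √(dsHS ((N : ℂ)⁻¹ • ∑ k, S (f k) - ∑ a, (p a : ℂ) • S a)) +
        ∑ f : Fin N → α, (∏ k, p (f k)) * (1 * ((N : ℂ)⁻¹ • ∑ k, T (f k))).trace.re +
        (∑ f : Fin N → α, (∏ k, p (f k))) * T0 +
        ∑ f : Fin N → α, (∏ k, p (f k)) * √(((1 - P) * ((N : ℂ)⁻¹ • ∑ k, R (f k))).trace.re) +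
        (∑ f : Fin N → α, (∏ k, p (f k))) * √G := by
        rw [Finset.mul_sum, Finset.sum_mul, Finset.sum_mul, ← Finset.sum_add_distrib,
          ← Finset.sum_add_distrib, ← Finset.sum_add_distrib, ← Finset.sum_add_distrib]
        refine Finset.sum_congr rfl fun f _ => ?_
        ring
    _ ≤ √P.trace.re * √(c / N) + T0 + T0 + √G + √G := by
        rw [hw1, one_mul, one_mul, hEtr 1 T]
        simp only [Matrix.one_mul]
        rw [hT0]
        gcongr
        · refine (ds_jensen _ _ hw0 hw1 fun f => dsHS_nonneg _).trans ?_
          exact Real.sqrt_le_sqrt (ds_hs p hp0 hp S c hc N hN)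
        · refine (ds_jensen _ _ hw0 hw1 fun f => ?_).trans ?_
          · exact (ds_proj 1 (1 - P) _ (by simp) hQ hQ2 (hpsd R hR f)).1
          · rw [hEtr, ← ds_tr_avg, hG]
    _ = _ := by ring

theorem ds_word_mul {m d n : ℕ} (A B : Fin m → Matrix (Fin d) (Fin d) ℂ) (J : Fin n → Fin m) :
    tensorWord A J * tensorWord B J = tensorWord (fun j => A j * B j) J := by
  ext K L
  simp only [tensorWord, Matrix.mul_apply, Matrix.of_apply]
  rw [Finset.prod_univ_sum, Fintype.piFinset_univ]
  simp only [Finset.prod_mul_distrib]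

theorem ds_word_diag {m d n : ℕ} (w : Fin m → Fin d → ℝ) (J : Fin n → Fin m) :
    tensorWord (fun j => Matrix.diagonal (fun i => (w j i : ℂ))) J =
      Matrix.diagonal (fun K : Fin n → Fin d => ((∏ t, w (J t) (K t) : ℝ) : ℂ)) := by
  ext K L
  simp only [tensorWord, Matrix.of_apply, Matrix.diagonal_apply]
  by_cases h : K = L
  · subst h; simp
  · rw [if_neg h]
    obtain ⟨t, ht⟩ := Function.ne_iff.1 h
    exact Finset.prod_eq_zero (Finset.mem_univ t) (if_neg ht)

theorem ds_word_one {m d n : ℕ} (J : Fin n → Fin m) :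
    tensorWord (fun _ => (1 : Matrix (Fin d) (Fin d) ℂ)) J = 1 := by
  have := ds_word_diag (fun _ _ => (1:ℝ)) J (d := d)
  simpa using this

open Matrix in
theorem ds_word_star {m d n : ℕ} (A : Fin m → Matrix (Fin d) (Fin d) ℂ) (J : Fin n → Fin m) :
    (tensorWord A J)ᴴ = tensorWord (fun j => (A j)ᴴ) J := by
  ext K L
  simp [tensorWord, Matrix.conjTranspose_apply]

/-- Functions of a diagonalised matrix. -/
noncomputable def dsConj {ι : Type*} [Fintype ι] [DecidableEq ι] (V : Matrix ι ι ℂ) (w : ι → ℝ) :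
    Matrix ι ι ℂ := V * Matrix.diagonal (fun i => (w i : ℂ)) * V.conjTranspose

open Matrix in
theorem dsConj_mul {ι : Type*} [Fintype ι] [DecidableEq ι] (V : Matrix ι ι ℂ) (hV : Vᴴ * V = 1)
    (w v : ι → ℝ) : dsConj V w * dsConj V v = dsConj V (fun i => w i * v i) := by
  unfold dsConj
  calc _ = V * diagonal (fun i => (w i : ℂ)) * (Vᴴ * V) * diagonal (fun i => (v i : ℂ)) * Vᴴ := by
        simp only [Matrix.mul_assoc]
    _ = V * (diagonal (fun i => (w i : ℂ)) * diagonal (fun i => (v i : ℂ))) * Vᴴ := by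
        rw [hV]; simp only [Matrix.mul_assoc, Matrix.one_mul]
    _ = _ := by rw [diagonal_mul_diagonal]; push_cast; rfl

open Matrix in
theorem dsConj_trace {ι : Type*} [Fintype ι] [DecidableEq ι] (V : Matrix ι ι ℂ) (hV : Vᴴ * V = 1)
    (w : ι → ℝ) : (dsConj V w).trace.re = ∑ i, w i := by
  unfold dsConj
  rw [Matrix.trace_mul_comm, ← Matrix.mul_assoc, hV, Matrix.one_mul, trace_diagonal,
    ← Complex.ofReal_sum, Complex.ofReal_re]

open Matrix in
theorem dsConj_star {ι : Type*} [Fintype ι] [DecidableEq ι] (V : Matrix ι ι ℂ)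
    (w : ι → ℝ) : (dsConj V w)ᴴ = dsConj V w := by
  unfold dsConj
  simp only [conjTranspose_mul, conjTranspose_conjTranspose, diagonal_conjTranspose,
    Matrix.mul_assoc]
  congr 3
  ext i; simp

theorem dsConj_psd {ι : Type*} [Fintype ι] [DecidableEq ι] (V : Matrix ι ι ℂ)
    (w : ι → ℝ) (hw : ∀ i, 0 ≤ w i) : (dsConj V w).PosSemidef := by
  unfold dsConj
  refine Matrix.PosSemidef.mul_mul_conjTranspose_same ?_ V
  exact Matrix.PosSemidef.diagonal fun i => (by exact_mod_cast hw i : (0:ℂ) ≤ (w i : ℂ))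

theorem dsConj_add {ι : Type*} [Fintype ι] [DecidableEq ι] (V : Matrix ι ι ℂ)
    (w v : ι → ℝ) : dsConj V (fun i => w i + v i) = dsConj V w + dsConj V v := by
  unfold dsConj
  rw [← Matrix.add_mul, ← Matrix.mul_add, Matrix.diagonal_add]
  push_cast; rfl

open Matrix in
theorem dsConj_one {ι : Type*} [Fintype ι] [DecidableEq ι] (V : Matrix ι ι ℂ) (hV : V * Vᴴ = 1) :
    dsConj V (fun _ => 1) = 1 := by
  unfold dsConj
  simp [hV]

open Matrix in
theorem dsConj_hs {ι : Type*} [Fintype ι] [DecidableEq ι] (V : Matrix ι ι ℂ) (hV : Vᴴ * V = 1)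
    (w : ι → ℝ) : dsHS (dsConj V w) = ∑ i, w i * w i := by
  rw [dsHS_eq, dsConj_star, dsConj_mul V hV, dsConj_trace V hV]

open Matrix in
theorem ds_word_spec {m d n : ℕ} (A V : Fin m → Matrix (Fin d) (Fin d) ℂ) (w : Fin m → Fin d → ℝ)
    (hV : ∀ j, V j * (V j)ᴴ = 1) (hV' : ∀ j, (V j)ᴴ * V j = 1)
    (hA : ∀ j, A j = V j * diagonal (fun i => (w j i : ℂ)) * (V j)ᴴ) (J : Fin n → Fin m) :
    tensorWord V J * (tensorWord V J)ᴴ = 1 ∧ (tensorWord V J)ᴴ * tensorWord V J = 1 ∧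
    tensorWord A J = dsConj (tensorWord V J) (fun K => ∏ t, w (J t) (K t)) := by
  refine ⟨?_, ?_, ?_⟩
  · rw [ds_word_star, ds_word_mul]; simp only [hV]; exact ds_word_one J
  · rw [ds_word_star, ds_word_mul]; simp only [hV']; exact ds_word_one J
  · rw [dsConj, ds_word_star, ← ds_word_diag, ds_word_mul, ds_word_mul]
    congr 1; ext1 j; exact hA j

theorem ds_pow_avg {m d n : ℕ} (ρs : Fin m → Matrix (Fin d) (Fin d) ℂ) (q : Fin m → ℝ) :
    tensorPow (∑ j, (q j : ℂ) • ρs j) n =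
      ∑ J : Fin n → Fin m, ((∏ t, q (J t) : ℝ) : ℂ) • tensorWord ρs J := by
  ext K L
  simp only [tensorPow, tensorWord, Matrix.of_apply, Matrix.sum_apply, Matrix.smul_apply,
    smul_eq_mul]
  rw [Finset.prod_univ_sum, Fintype.piFinset_univ]
  refine Finset.sum_congr rfl fun J _ => ?_
  rw [Finset.prod_mul_distrib]; push_cast; rfl

theorem ds_logprod {n : ℕ} (x : Fin n → ℝ) (hx : ∏ t, x t ≠ 0) :
    Real.logb 2 (∏ t, x t) = ∑ t, Real.logb 2 (x t) :=
  Real.logb_prod _ _ fun t ht => (Finset.prod_ne_zero_iff.1 hx) t ht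

theorem ds_spec_density {d : ℕ} {A : Matrix (Fin d) (Fin d) ℂ} (hA : IsDensityMatrix A) :
    ∃ (V : Matrix (Fin d) (Fin d) ℂ) (w : Fin d → ℝ), V * V.conjTranspose = 1 ∧
      V.conjTranspose * V = 1 ∧ (∀ i, 0 ≤ w i) ∧ ∑ i, w i = 1 ∧
      A = V * Matrix.diagonal (fun i => (w i : ℂ)) * V.conjTranspose ∧
      vnEntropy A = -∑ i, w i * Real.logb 2 (w i) := by
  obtain ⟨V, h1, h2, h3⟩ := ds_spec hA.1.isHermitian
  refine ⟨V, hA.1.isHermitian.eigenvalues, h1, h2, hA.1.eigenvalues_nonneg, ?_, h3, ?_⟩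
  · rw [← dsConj_trace V h2, dsConj, ← h3, hA.2, Complex.one_re]
  · rw [vnEntropy, dif_pos hA.1.isHermitian]

/-- Markov -/
theorem ds_markov {β : Type*} [Fintype β] (w X : β → ℝ) (hw : ∀ b, 0 ≤ w b) (hw1 : ∑ b, w b = 1)
    (hX : ∀ b, 0 ≤ X b) (ε : ℝ) (hε : 0 < ε) (h : ∑ b, w b * X b ≤ ε * ε)
    [DecidablePred fun b => X b ≤ ε] :
    1 - ε ≤ ∑ b ∈ Finset.univ.filter (fun b => X b ≤ ε), w b := by
  have h1 := Finset.sum_filter_add_sum_filter_not Finset.univ (fun b => X b ≤ ε) w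
  rw [hw1] at h1
  have h2 : (∑ b ∈ Finset.univ.filter (fun b => ¬ X b ≤ ε), w b) * ε ≤ ε * ε := by
    refine le_trans ?_ h
    rw [Finset.sum_mul]
    calc _ ≤ ∑ b ∈ Finset.univ.filter (fun b => ¬ X b ≤ ε), w b * X b := by
          refine Finset.sum_le_sum fun b hb => ?_
          have := (Finset.mem_filter.1 hb).2
          exact mul_le_mul_of_nonneg_left (not_le.1 this).le (hw b)
      _ ≤ _ := Finset.sum_le_univ_sum_of_nonneg fun b => mul_nonneg (hw b) (hX b)
  have h3 := le_of_mul_le_mul_right h2 hε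
  linarith

theorem ds_traceNorm_nonneg {ι : Type*} [Fintype ι] [DecidableEq ι] (M : Matrix ι ι ℂ) :
    0 ≤ traceNorm M := by
  unfold traceNorm
  split_ifs
  · exact Finset.sum_nonneg fun _ _ => abs_nonneg _
  · exact le_rfl

theorem ds_density_avg {m d : ℕ}
    (ρs : Fin m → Matrix (Fin d) (Fin d) ℂ) (hρs : ∀ j, IsDensityMatrix (ρs j))
    (q : Fin m → ℝ) (hq : ∀ j, 0 < q j) (hqs : ∑ j, q j = 1) :
    IsDensityMatrix (∑ j, (q j : ℂ) • ρs j) := by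
  refine ⟨ds_psd_avg q (fun j => (hq j).le) ρs fun j => (hρs j).1, ?_⟩
  rw [Matrix.trace_sum]
  simp only [Matrix.trace_smul, (hρs _).2, smul_eq_mul, mul_one]
  exact_mod_cast hqs

theorem ds_rank {β : Type*} [Fintype β] (w : β → ℝ) (hw : ∀ b, 0 ≤ w b) (hw1 : ∑ b, w b = 1)
    (c : ℝ) (hc : 0 < c) [DecidablePred fun b => c ≤ w b] :
    ∑ b, (if c ≤ w b then (1:ℝ) else 0) ≤ c⁻¹ := by
  have h1 : c⁻¹ = ∑ b, c⁻¹ * w b := by rw [← Finset.mul_sum, hw1, mul_one]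
  rw [h1]
  refine Finset.sum_le_sum fun b _ => ?_
  split_ifs with h
  · rw [← div_eq_inv_mul, le_div_iff₀ hc, one_mul]; exact h
  · exact mul_nonneg (by positivity) (hw b)

open scoped Classical in
/-- density sampling (operator Chernoff bound for ensembles):
`N ≥ 2^{n(χ+δ)}` i.i.d. samples from the induced distribution on tensor products
`ρ_J` have average trace-norm close to `ρ^{⊗n}`, with probability at least `1 − ε`. -/
theorem density_sampling {m d : ℕ}
    (ρs : Fin m → Matrix (Fin d) (Fin d) ℂ) (hρs : ∀ j, IsDensityMatrix (ρs j))
    (q : Fin m → ℝ) (hq : ∀ j, 0 < q j) (hqs : ∑ j, q j = 1)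
    (ρ : Matrix (Fin d) (Fin d) ℂ) (hρ : ρ = ∑ j, (q j : ℂ) • ρs j)
    (χ : ℝ) (hχ : χ = vnEntropy ρ - ∑ j, q j * vnEntropy (ρs j))
    (ε δ : ℝ) (hε : 0 < ε) (hδ : 0 < δ) :
    ∃ n₀ : ℕ, ∀ n, n₀ ≤ n → ∀ N : ℕ, (2 : ℝ) ^ ((n : ℝ) * (χ + δ)) ≤ N →
      1 - ε ≤
        ∑ f ∈ Finset.univ.filter (fun f : Fin N → Fin n → Fin m =>
            traceNorm ((N : ℂ)⁻¹ • ∑ k, tensorWord ρs (f k) - tensorPow ρ n) ≤ ε),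
          ∏ k, ∏ t, q (f k t) := by
  classical
  have hρd : IsDensityMatrix ρ := hρ ▸ ds_density_avg ρs hρs q hq hqs
  obtain ⟨V, v, hV, hV', hv0, hv1, hρV, hS⟩ := ds_spec_density hρd
  choose W w hW hW' hw0 hw1 hρW hSw using fun j => ds_spec_density (hρs j)
  set S := vnEntropy ρ with hSdef
  set H := ∑ j, q j * vnEntropy (ρs j) with hH
  -- typicality
  obtain ⟨n₁, hn₁⟩ := ds_cheb v hv0 hv1 (fun i => Real.logb 2 (v i)) (-S) (by rw [hS, neg_neg])
    (δ / 3) ((ε * ε / 6) ^ 2) (by positivity) (by positivity)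
  obtain ⟨n₂, hn₂⟩ := ds_cheb (fun x : Fin m × Fin d => q x.1 * w x.1 x.2)
    (fun x => mul_nonneg (hq _).le (hw0 _ _))
    (by rw [Fintype.sum_prod_type]; simp only [← Finset.mul_sum, hw1, mul_one, hqs])
    (fun x => Real.logb 2 (w x.1 x.2)) (-H)
    (by
      rw [Fintype.sum_prod_type, hH, ← Finset.sum_neg_distrib]
      refine Finset.sum_congr rfl fun j _ => ?_
      simp only [mul_assoc]
      rw [← Finset.mul_sum, hSw]; ring)
    (δ / 3) (ε * ε / 6) (by positivity) (by positivity)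
  obtain ⟨n₃, hn₃⟩ := exists_pow_lt_of_lt_one (x := (ε * ε / 3) ^ 2) (y := (2:ℝ) ^ (-(δ / 3)))
    (by positivity) (Real.rpow_lt_one_of_one_lt_of_neg (by norm_num) (by linarith))
  refine ⟨n₁ + n₂ + n₃, fun n hn N hN => ?_⟩
  have hNpos : 0 < N := by
    have : (0:ℝ) < N := lt_of_lt_of_le (by positivity) hN
    exact_mod_cast this
  have hN' : (0:ℝ) < N := by exact_mod_cast hNpos
  specialize hn₁ n (by omega)
  specialize hn₂ n (by omega)
  have hn₃' : (2:ℝ) ^ (-((n:ℝ) * (δ / 3))) ≤ (ε * ε / 3) ^ 2 := by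
    have e1 : (2:ℝ) ^ (-((n:ℝ) * (δ / 3))) = ((2:ℝ) ^ (-(δ / 3))) ^ n := by
      rw [← Real.rpow_natCast, ← Real.rpow_mul (by norm_num)]; congr 1; ring
    rw [e1]
    refine le_trans (pow_le_pow_of_le_one (by positivity) ?_ (by omega : n₃ ≤ n)) hn₃.le
    exact (Real.rpow_lt_one_of_one_lt_of_neg (by norm_num) (by linarith)).le
  -- thresholds
  set c' : ℝ := (2:ℝ) ^ (-((n:ℝ) * (S + δ / 3))) with hc'
  set c : ℝ := (2:ℝ) ^ (-((n:ℝ) * (H - δ / 3))) with hc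
  have hc'0 : 0 < c' := by positivity
  have hc0 : 0 < c := by positivity
  set Q : (Fin n → Fin m) → ℝ := fun J => ∏ t, q (J t) with hQ
  have hQ0 : ∀ J, 0 ≤ Q J := fun J => Finset.prod_nonneg fun t _ => (hq _).le
  have hQ1 : ∑ J, Q J = 1 := ds_prob q hqs n
  set l : (Fin n → Fin m) → (Fin n → Fin d) → ℝ := fun J K => ∏ t, w (J t) (K t) with hl
  set L : (Fin n → Fin d) → ℝ := fun K => ∏ t, v (K t) with hL
  have hl0 : ∀ J K, 0 ≤ l J K := fun J K => Finset.prod_nonneg fun t _ => hw0 _ _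
  have hL0 : ∀ K, 0 ≤ L K := fun K => Finset.prod_nonneg fun t _ => hv0 _
  have hL1 : ∑ K, L K = 1 := ds_prob v hv1 n
  have hl1 : ∀ J, ∑ K, l J K = 1 := by
    intro J
    have := Finset.prod_univ_sum (fun _ : Fin n => (Finset.univ : Finset (Fin d)))
      (fun t i => w (J t) i)
    rw [Fintype.piFinset_univ] at this
    rw [hl]; simp only
    rw [← this]; simp [hw1]
  have hword := fun J : Fin n → Fin m => ds_word_spec ρs W w hW hW' hρW J
  obtain ⟨hY, hY', hpow⟩ := ds_word_spec (m := 1) (n := n) (fun _ => ρ) (fun _ => V) (fun _ => v)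
    (fun _ => hV) (fun _ => hV') (fun _ => hρV) (fun _ => 0)
  set Y := tensorWord (m := 1) (n := n) (fun _ => V) (fun _ => 0) with hYdef
  have hpow' : tensorPow ρ n = dsConj Y L := hpow
  set P := dsConj Y (fun K => if c' ≤ L K then 1 else 0) with hP
  have hG : ((1 - P) * ∑ J, (Q J : ℂ) • tensorWord ρs J).trace.re =
      ∑ K, (if c' ≤ L K then 0 else L K) := by
    rw [← ds_pow_avg, ← hρ, hpow', Matrix.sub_mul, Matrix.one_mul, hP, dsConj_mul Y hY',
      Matrix.trace_sub, Complex.sub_re, dsConj_trace Y hY', dsConj_trace Y hY',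
      ← Finset.sum_sub_distrib]
    refine Finset.sum_congr rfl fun K _ => ?_
    split_ifs <;> simp
  have hGle : ∑ K, (if c' ≤ L K then 0 else L K) ≤ (ε * ε / 6) ^ 2 := by
    refine hn₁ _ (fun K => ?_) (fun K => ?_) (fun K hK => ?_)
    · split_ifs
      · exact le_rfl
      · exact hL0 K
    · split_ifs
      · exact hL0 K
      · exact le_rfl
    · split_ifs at hK with h
      · exact absurd rfl hK
      · have h1 : Real.logb 2 (L K) < -((n:ℝ) * (S + δ / 3)) := by
          rw [Real.logb_lt_iff_lt_rpow (by norm_num) (lt_of_le_of_ne (hL0 K) (Ne.symm hK))]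
          exact not_le.1 h
        rw [hL, ds_logprod _ hK] at h1
        rw [← abs_neg]
        refine le_trans ?_ (le_abs_self _)
        linarith
  have hTle : ∑ J, Q J * ∑ K, (if l J K ≤ c then 0 else l J K) ≤ ε * ε / 6 := by
    have e1 : ∑ J, Q J * ∑ K, (if l J K ≤ c then 0 else l J K) =
        ∑ a : Fin n → Fin m × Fin d, Q (fun t => (a t).1) *
          (if l (fun t => (a t).1) (fun t => (a t).2) ≤ c then 0 else
            l (fun t => (a t).1) (fun t => (a t).2)) := by
      simp only [Finset.mul_sum]
      rw [← Fintype.sum_prod_type']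
      exact (Fintype.sum_equiv (Equiv.arrowProdEquivProdArrow (Fin n) (fun _ => Fin m)
        (fun _ => Fin d)) _ _ (fun x => rfl)).symm
    rw [e1]
    refine hn₂ _ (fun a => ?_) (fun a => ?_) (fun a ha => ?_)
    · refine mul_nonneg (hQ0 _) ?_
      split_ifs
      · exact le_rfl
      · exact hl0 _ _
    · rw [Finset.prod_mul_distrib]
      refine mul_le_mul_of_nonneg_left ?_ (hQ0 fun t => (a t).1)
      split_ifs
      · exact hl0 (fun t => (a t).1) (fun t => (a t).2)
      · exact le_rfl
    · have ha2 := right_ne_zero_of_mul ha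
      split_ifs at ha2 with h
      · exact absurd rfl ha2
      · have h1 : -((n:ℝ) * (H - δ / 3)) <
            Real.logb 2 (l (fun t => (a t).1) (fun t => (a t).2)) := by
          rw [Real.lt_logb_iff_rpow_lt (by norm_num) (lt_of_le_of_ne (hl0 _ _) (Ne.symm ha2))]
          exact not_le.1 h
        rw [hl] at h1 ha2
        simp only at h1 ha2
        rw [ds_logprod _ ha2] at h1
        refine le_trans ?_ (le_abs_self _)
        linarith
  have main := ds_avg Q hQ0 hQ1 (tensorWord ρs)
    (fun J => dsConj (tensorWord W J) (fun K => if l J K ≤ c then l J K else 0))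
    (fun J => dsConj (tensorWord W J) (fun K => if l J K ≤ c then 0 else l J K)) P
    (by
      intro J
      rw [← dsConj_add, (hword J).2.2]
      congr 1; ext K
      split_ifs <;> simp [hl])
    (by intro J; rw [(hword J).2.2]; exact dsConj_psd _ _ (hl0 J))
    (by
      intro J
      refine dsConj_psd _ _ fun K => ?_
      split_ifs
      · exact le_rfl
      · exact hl0 J K)
    (by intro J; rw [(hword J).2.2, dsConj_trace _ (hword J).2.1]; exact hl1 J)
    (dsConj_star _ _)
    (by
      rw [hP, dsConj_mul Y hY']
      congr 1; ext K
      split_ifs <;> simp)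
    c
    (by
      intro J
      rw [dsConj_hs _ (hword J).2.1]
      calc _ ≤ ∑ K, c * l J K := by
            refine Finset.sum_le_sum fun K _ => ?_
            split_ifs with h
            · exact mul_le_mul_of_nonneg_right h (hl0 J K)
            · rw [zero_mul]; exact mul_nonneg hc0.le (hl0 J K)
        _ = c := by rw [← Finset.mul_sum, hl1, mul_one])
    N hNpos _ _ rfl hG
  rw [← ds_pow_avg, ← hρ] at main
  refine ds_markov (fun f : Fin N → Fin n → Fin m => ∏ k, ∏ t, q (f k t)) _
    (fun f => Finset.prod_nonneg fun k _ => hQ0 (f k)) (ds_prob Q hQ1 N)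
    (fun f => ds_traceNorm_nonneg _) ε hε (main.trans ?_)
  have t1 : √P.trace.re * √(c / N) ≤ ε * ε / 3 := by
    have hD : P.trace.re ≤ c'⁻¹ := by
      rw [hP, dsConj_trace Y hY']
      exact ds_rank L hL0 hL1 c' hc'0
    rw [← Real.sqrt_mul' _ (by positivity)]
    refine Real.sqrt_le_iff.2 ⟨by positivity, le_trans ?_ hn₃'⟩
    calc P.trace.re * (c / N) ≤ c'⁻¹ * (c / (2 : ℝ) ^ ((n : ℝ) * (χ + δ))) := by
          gcongr
      _ = _ := by
          rw [hc', hc, ← Real.rpow_neg (by norm_num), ← Real.rpow_sub (by norm_num),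
            ← Real.rpow_add (by norm_num)]
          congr 1
          rw [hχ]; ring
  have t2 : ∑ J, Q J * (dsConj (tensorWord W J)
      (fun K => if l J K ≤ c then 0 else l J K)).trace.re ≤ ε * ε / 6 := by
    refine le_trans (le_of_eq (Finset.sum_congr rfl fun J _ => ?_)) hTle
    rw [dsConj_trace _ (hword J).2.1]
  have t3 : √(∑ K, (if c' ≤ L K then 0 else L K)) ≤ ε * ε / 6 :=
    Real.sqrt_le_iff.2 ⟨by positivity, hGle⟩
  linarith
end
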